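/- arXiv:2211.11023 — 4 statements merged into one kernel-verified Lean document; each statement's English description precedes it below -/
import Mathlib

section
/- Fix a prime power q and ε ∈ (0,1/2). There exist constants c, C > 0 (depending only on q and ε) and an integer N such that for all integers n ≥ N and all integers m with (3/4)·(log n)/(log q) ≤ m ≤ (2−ε)·(log n)/(log q), one has c·(min{n, q^m})²/(m·q^{m}) ≤ log G_q(x_q) ≤ C·(min{n, q^m})²/(m·q^{m}) · 1/(1 − x_q/q). -/
open Real

noncomputable section

/-- Predicate characterizing the Dickman function `ρ : [0,∞) → (0,∞)`:
continuous on `[0,∞)`, positive, equal to `1` on `[0,1]`, and satisfying the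
delay differential equation `t·ρ'(t) + ρ(t-1) = 0` for `t > 1`. -/
def IsDickman (ρ : ℝ → ℝ) : Prop :=
  ContinuousOn ρ (Set.Ici 0) ∧
  (∀ t : ℝ, 0 ≤ t → 0 < ρ t) ∧
  (∀ t ∈ Set.Icc (0:ℝ) 1, ρ t = 1) ∧
  (∀ t : ℝ, 1 < t → HasDerivAt ρ (-(ρ (t - 1)) / t) t)

/-- `ξ(u)`: for `u > 1`, the unique positive solution of `e^ξ = 1 + u·ξ`; otherwise `0`. -/
def xi (u : ℝ) : ℝ :=
  open Classical in
  if h : ∃ x : ℝ, 0 < x ∧ Real.exp x = 1 + u * x then h.choose else 0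

/-- `p_{n,m}`: probability that a uniformly random permutation of `{1,…,n}` is `m`-friable,
i.e. has no cycle of length greater than `m`. -/
def permProb (n m : ℕ) : ℝ :=
  (Nat.card {σ : Equiv.Perm (Fin n) // ∀ c ∈ σ.cycleType, c ≤ m} : ℝ) /
    (Nat.factorial n : ℝ)

/-- `p_{n,m,q}`: proportion of monic polynomials of degree `n` over a finite field `F`
(of cardinality `q`) that are `m`-friable, i.e. all of whose monic irreducible factors
have degree at most `m`. -/
def polyProb (F : Type) [Field F] [Fintype F] (n m : ℕ) : ℝ :=
  (Nat.card {f : Polynomial F // f.Monic ∧ f.natDegree = n ∧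
      ∀ p : Polynomial F, p.Monic → Irreducible p → p ∣ f → p.natDegree ≤ m} : ℝ) /
    (Fintype.card F : ℝ) ^ n

/-- `F_q(z) = ∏_{deg P ≤ m} (1 - (z/q)^{deg P})⁻¹`, the product over monic irreducible
polynomials `P` over `F` of degree at most `m`. -/
def FqFun (F : Type) [Field F] [Fintype F] (m : ℕ) (z : ℝ) : ℝ :=
  ∏ᶠ p ∈ {p : Polynomial F | p.Monic ∧ Irreducible p ∧ p.natDegree ≤ m},
    (1 - (z / (Fintype.card F : ℝ)) ^ p.natDegree)⁻¹

/-- `G_q(z) = F_q(z) · exp(-∑_{i=1}^m z^i/i)`. -/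
def Gq (F : Type) [Field F] [Fintype F] (m : ℕ) (z : ℝ) : ℝ :=
  FqFun F m z * Real.exp (-(∑ i ∈ Finset.Icc 1 m, z ^ i / (i : ℝ)))

/-- The coefficients `d_{m,i}`. -/
def dcoef (m i : ℕ) : ℝ :=
  if i = m then -(1 / (m : ℝ)) * ∑ j ∈ Finset.Icc 2 m, (1 : ℝ) / (j : ℝ)
  else Real.Gamma ((i : ℝ) + (i : ℝ) / (m : ℝ)) /
    (((m : ℝ) - (i : ℝ)) * (Nat.factorial i : ℝ) * Real.Gamma (1 + (i : ℝ) / (m : ℝ)))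

/-- `T(s) = ∫₀^s ((e^t - 1)/t)·((t/m)/(1 - e^{-t/m}) - 1) dt`, integrand extended by `0` at `t = 0`. -/
def Tfun (m : ℕ) (s : ℝ) : ℝ :=
  ∫ t in (0:ℝ)..s,
    if t = 0 then 0 else
      ((Real.exp t - 1) / t) * ((t / (m : ℝ)) / (1 - Real.exp (-t / (m : ℝ))) - 1)

end

open Polynomial in
/-- The set of monic irreducible polynomials of degree `d`. -/
def irrSet (F : Type) [Field F] (d : ℕ) : Set (Polynomial F) :=
  {p : Polynomial F | p.Monic ∧ Irreducible p ∧ p.natDegree = d}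

open Polynomial UniqueFactorizationMonoid in
lemma mem_factors_iff (F : Type) [Field F] [Fintype F] [DecidableEq F] (n : ℕ) (hn : n ≠ 0) (p : F[X]) :
    p ∈ normalizedFactors (X ^ (Fintype.card F) ^ n - X : F[X]) ↔
      p.Monic ∧ Irreducible p ∧ p.natDegree ∣ n := by
  have h0 : (X ^ (Fintype.card F) ^ n - X : F[X]) ≠ 0 :=
    FiniteField.X_pow_card_pow_sub_X_ne_zero _ hn Fintype.one_lt_card
  rw [mem_normalizedFactors_iff' h0]
  constructor
  · rintro ⟨hi, hnorm, hd⟩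
    refine ⟨?_, hi, ?_⟩
    · rw [← hnorm]; exact monic_normalize hi.ne_zero
    · rw [hi.natDegree_dvd_iff_dvd_X_pow_card_pow_sub_X, Nat.card_eq_fintype_card]; exact hd
  · rintro ⟨hm, hi, hd⟩
    refine ⟨hi, hm.normalize_eq_self, ?_⟩
    rw [hi.natDegree_dvd_iff_dvd_X_pow_card_pow_sub_X, Nat.card_eq_fintype_card] at hd
    exact hd

open Polynomial UniqueFactorizationMonoid in
lemma irrSet_finite (F : Type) [Field F] [Fintype F] (d : ℕ) : (irrSet F d).Finite := by
  classical
  rcases Nat.eq_zero_or_pos d with rfl | hd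
  · convert Set.finite_empty
    ext p
    simp only [irrSet, Set.mem_ofPred_eq, Set.mem_empty_iff_false, iff_false]
    rintro ⟨_, hi, h⟩
    exact absurd hi.natDegree_pos (by omega)
  · apply (normalizedFactors (X ^ (Fintype.card F) ^ d - X : F[X])).toFinset.finite_toSet.subset
    rintro p ⟨hm, hi, h⟩
    simp only [Finset.mem_coe, Multiset.mem_toFinset]
    rw [mem_factors_iff F d (by omega)]
    exact ⟨hm, hi, by rw [h]⟩

/-- The number of monic irreducible polynomials of degree `d`. -/
noncomputable def irrCount (F : Type) [Field F] [Fintype F] (d : ℕ) : ℕ := (irrSet_finite F d).toFinset.card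

open Polynomial UniqueFactorizationMonoid in
lemma sum_irrCount (F : Type) [Field F] [Fintype F] (n : ℕ) (hn : n ≠ 0) :
    ∑ d ∈ n.divisors, d * irrCount F d = (Fintype.card F) ^ n := by
  classical
  set P : F[X] := X ^ (Fintype.card F) ^ n - X with hP
  have h0 : P ≠ 0 :=
    FiniteField.X_pow_card_pow_sub_X_ne_zero _ hn Fintype.one_lt_card
  have hdeg : P.natDegree = (Fintype.card F) ^ n :=
    FiniteField.X_pow_card_pow_sub_X_natDegree_eq _ hn Fintype.one_lt_card
  have hsep : P.Separable := by
    obtain ⟨p, hp⟩ := CharP.exists F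
    refine galois_poly_separable p _ ?_
    refine dvd_pow ?_ hn
    rw [← CharP.cast_eq_zero_iff F p]
    exact FiniteField.cast_card_eq_zero F
  have hnd : (normalizedFactors P).Nodup :=
    (squarefree_iff_nodup_normalizedFactors h0).1 hsep.squarefree
  have hprod : P.natDegree = ((normalizedFactors P).map natDegree).sum := by
    have h1 := prod_normalizedFactors h0
    rw [← natDegree_multiset_prod, natDegree_eq_of_degree_eq (degree_eq_degree_of_associated h1)]
    intro h
    exact zero_notMem_normalizedFactors P h
  rw [← hdeg, hprod]
  have h2 : ((normalizedFactors P).map natDegree).sum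
      = ∑ p ∈ (normalizedFactors P).toFinset, p.natDegree := by
    rw [Finset.sum, Multiset.toFinset_val, hnd.dedup]
  rw [h2, ← Finset.sum_fiberwise_of_maps_to (g := natDegree) (t := n.divisors)]
  · apply Finset.sum_congr rfl
    intro d hd
    rw [Finset.sum_congr rfl (g := fun _ => d) (by
      intro p hp; exact (Finset.mem_filter.1 hp).2)]
    rw [Finset.sum_const, smul_eq_mul, mul_comm, irrCount]
    congr 2
    ext p
    simp only [Set.Finite.mem_toFinset, irrSet, Set.mem_ofPred_eq, Finset.mem_filter,
      Multiset.mem_toFinset, hP, mem_factors_iff F n hn]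
    have := (Nat.mem_divisors.1 hd).1
    constructor
    · rintro ⟨a, b, rfl⟩; exact ⟨⟨a, b, this⟩, rfl⟩
    · rintro ⟨⟨a, b, _⟩, h⟩; exact ⟨a, b, h⟩
  · intro p hp
    rw [Multiset.mem_toFinset, hP, mem_factors_iff F n hn] at hp
    exact Nat.mem_divisors.2 ⟨hp.2.2, hn⟩

lemma FqFun_eq (F : Type) [Field F] [Fintype F] (m : ℕ) (z : ℝ) :
    FqFun F m z = ∏ d ∈ Finset.Icc 1 m, ((1 - (z / (Fintype.card F : ℝ)) ^ d)⁻¹) ^ irrCount F d := by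
  classical
  unfold FqFun
  have hS : {p : Polynomial F | p.Monic ∧ Irreducible p ∧ p.natDegree ≤ m} =
      (((Finset.Icc 1 m).biUnion fun d => (irrSet_finite F d).toFinset : Finset (Polynomial F)) :
        Set (Polynomial F)) := by
    ext p
    simp only [Set.mem_ofPred_eq, Finset.coe_biUnion, Set.mem_iUnion, Finset.mem_coe,
      Set.Finite.mem_toFinset, irrSet, Finset.mem_Icc]
    constructor
    · rintro ⟨a, b, c⟩
      exact ⟨p.natDegree, ⟨b.natDegree_pos, c⟩, a, b, rfl⟩
    · rintro ⟨d, ⟨_, hd⟩, a, b, rfl⟩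
      exact ⟨a, b, hd⟩
  rw [hS, finprod_mem_coe_finset, Finset.prod_biUnion]
  · apply Finset.prod_congr rfl
    intro d hd
    rw [irrCount, ← Finset.prod_const]
    apply Finset.prod_congr rfl
    intro p hp
    rw [Set.Finite.mem_toFinset] at hp
    rw [hp.2.2]
  · intro d _ e _ hde
    rw [Function.onFun, Finset.disjoint_left]
    intro p hp hp'
    rw [Set.Finite.mem_toFinset] at hp hp'
    exact hde (hp.2.2.symm.trans hp'.2.2)

lemma FqFun_logDeriv (F : Type) [Field F] [Fintype F] (m : ℕ) (x : ℝ) (hx : 0 < x)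
    (hxq : x < (Fintype.card F : ℝ)) :
    x * deriv (FqFun F m) x / FqFun F m x = ∑ d ∈ Finset.Icc 1 m, (d : ℝ) * irrCount F d *
      ((x / (Fintype.card F : ℝ)) ^ d / (1 - (x / (Fintype.card F : ℝ)) ^ d)) := by
  have hq : (0 : ℝ) < Fintype.card F := hx.trans hxq
  set q : ℝ := (Fintype.card F : ℝ) with hqdef
  have hy0 : 0 < x / q := div_pos hx hq
  have hy1 : x / q < 1 := (div_lt_one hq).2 hxq
  have hpos : ∀ d ∈ Finset.Icc 1 m, 0 < 1 - (x / q) ^ d := by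
    intro d hd
    have := pow_lt_one₀ hy0.le hy1 (n := d) (by have := Finset.mem_Icc.1 hd; omega)
    linarith
  have hfun : FqFun F m = fun z => ∏ d ∈ Finset.Icc 1 m, ((1 - (z / q) ^ d)⁻¹) ^ irrCount F d := by
    funext z; exact FqFun_eq F m z
  have hder : ∀ d ∈ Finset.Icc 1 m, HasDerivAt (fun z : ℝ => (1 - (z / q) ^ d)⁻¹)
      (-(-(d * (x / q) ^ (d - 1) * (1 / q))) / (1 - (x / q) ^ d) ^ 2) x := by
    intro d hd
    have h1 : HasDerivAt (fun z : ℝ => (z / q) ^ d) (d * (x / q) ^ (d - 1) * (1 / q)) x :=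
      ((hasDerivAt_id x).div_const q).pow d
    exact (h1.const_sub 1).inv (hpos d hd).ne'
  have key : logDeriv (FqFun F m) x = ∑ d ∈ Finset.Icc 1 m,
      logDeriv (fun z : ℝ => ((1 - (z / q) ^ d)⁻¹) ^ irrCount F d) x := by
    rw [hfun]
    apply logDeriv_prod
    · intro d hd
      exact pow_ne_zero _ (inv_ne_zero (hpos d hd).ne')
    · intro d hd
      exact ((hder d hd).differentiableAt).pow _
  rw [mul_div_assoc, ← logDeriv_apply, key, Finset.mul_sum]
  apply Finset.sum_congr rfl
  intro d hd
  have hp := hpos d hd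
  rw [logDeriv_fun_pow (hder d hd).differentiableAt, logDeriv_apply, (hder d hd).deriv]
  obtain ⟨e, rfl⟩ : ∃ e, d = e + 1 := ⟨d - 1, by have := Finset.mem_Icc.1 hd; omega⟩
  simp only [Nat.add_sub_cancel] at *
  have h3 := hp.ne'
  have e1 : x * (1 / q) = x / q := by ring
  rw [neg_neg, div_inv_eq_mul, pow_succ (x / q) e] at *
  field_simp

lemma log_FqFun (F : Type) [Field F] [Fintype F] (m : ℕ) (x : ℝ) (hx : 0 < x)
    (hxq : x < (Fintype.card F : ℝ)) :
    0 < FqFun F m x ∧ Real.log (FqFun F m x) = ∑ d ∈ Finset.Icc 1 m, (irrCount F d : ℝ) *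
      (- Real.log (1 - (x / (Fintype.card F : ℝ)) ^ d)) := by
  have hq : (0 : ℝ) < Fintype.card F := hx.trans hxq
  have hy0 : 0 < x / Fintype.card F := div_pos hx hq
  have hy1 : x / Fintype.card F < 1 := (div_lt_one hq).2 hxq
  have hpos : ∀ d ∈ Finset.Icc 1 m, 0 < 1 - (x / Fintype.card F) ^ d := by
    intro d hd
    have := pow_lt_one₀ hy0.le hy1 (n := d) (by have := Finset.mem_Icc.1 hd; omega)
    linarith
  rw [FqFun_eq]
  refine ⟨Finset.prod_pos fun d hd => pow_pos (inv_pos.2 (hpos d hd)) _, ?_⟩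
  rw [Real.log_prod (fun d hd => (pow_pos (inv_pos.2 (hpos d hd)) _).ne')]
  apply Finset.sum_congr rfl
  intro d hd
  rw [Real.log_pow, Real.log_inv]

/-! ### Elementary analytic estimates -/

lemma geom_bound (A x : ℝ) (hx : 0 < x) (hA : 0 ≤ A) (h : A + x ≤ A * x) (m : ℕ) :
    ∑ d ∈ Finset.Icc 1 m, x ^ d ≤ A * x ^ m := by
  induction m with
  | zero => simpa using hA
  | succ m ih =>
    rw [Finset.sum_Icc_succ_top (by omega)]
    have h1 : 0 < x ^ m := pow_pos hx m
    calc _ ≤ A * x ^ m + x ^ (m + 1) := by linarith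
      _ = (A + x) * x ^ m := by ring
      _ ≤ (A * x) * x ^ m := by gcongr
      _ = _ := by ring

lemma geom_bound2 (A x : ℝ) (hx : 0 < x) (hA : 0 ≤ A) (h : A + x ≤ A * x) (m : ℕ) :
    ∑ d ∈ Finset.Icc 1 m, ((m : ℝ) + 1 - d) * x ^ d ≤ A ^ 2 * x ^ m := by
  induction m with
  | zero => simp; positivity
  | succ m ih =>
    have h1 : 0 < x ^ m := pow_pos hx m
    have h2 := geom_bound A x hx hA h (m + 1)
    have e : ∑ d ∈ Finset.Icc 1 (m + 1), (((m + 1 : ℕ) : ℝ) + 1 - d) * x ^ d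
        = ∑ d ∈ Finset.Icc 1 m, ((m : ℝ) + 1 - d) * x ^ d + ∑ d ∈ Finset.Icc 1 (m + 1), x ^ d := by
      rw [Finset.sum_Icc_succ_top (by omega), Finset.sum_Icc_succ_top (by omega), ← add_assoc,
        ← Finset.sum_add_distrib]
      congr 1
      · apply Finset.sum_congr rfl; intro d _; push_cast; ring
      · push_cast; ring
    rw [e]
    calc _ ≤ A ^ 2 * x ^ m + A * x ^ (m + 1) := by linarith
      _ = A * ((A + x) * x ^ m) := by ring
      _ ≤ A * ((A * x) * x ^ m) := by gcongr
      _ = _ := by ring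

lemma bern1 (y : ℝ) (hy : 0 ≤ y) (hy1 : y ≤ 1) (m d : ℕ) (hd : d ≤ m) :
    d * y ^ m * (1 - y) ≤ 1 - y ^ d := by
  induction d with
  | zero => simp
  | succ d ih =>
    have h1 := ih (by omega)
    have h2 : y ^ m ≤ y ^ d := pow_le_pow_of_le_one hy hy1 (by omega)
    have h3 : y ^ m * (1 - y) ≤ y ^ d * (1 - y) := mul_le_mul_of_nonneg_right h2 (by linarith)
    push_cast
    calc _ = d * y ^ m * (1 - y) + y ^ m * (1 - y) := by ring
      _ ≤ (1 - y ^ d) + y ^ d * (1 - y) := by linarith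
      _ = _ := by ring

lemma bern2 (y : ℝ) (hy : 0 ≤ y) (hy1 : y ≤ 1) (m d : ℕ) (hd : d ≤ m) :
    d * (1 - y ^ m) ≤ m * (1 - y ^ d) := by
  induction m, hd using Nat.le_induction with
  | base => exact le_rfl
  | succ m hm ih =>
    have := bern1 y hy hy1 m d hm
    push_cast
    calc _ = d * (1 - y ^ m) + d * y ^ m * (1 - y) := by ring
      _ ≤ m * (1 - y ^ d) + (1 - y ^ d) := by linarith
      _ = _ := by ring

/-- Tail of the logarithmic series. -/
noncomputable def logTail (K : ℕ) (w : ℝ) : ℝ :=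
  -Real.log (1 - w) - ∑ k ∈ Finset.Icc 1 K, w ^ k / (k : ℝ)

lemma logTail_hasSum (K : ℕ) (w : ℝ) (hw : 0 ≤ w) (hw1 : w < 1) :
    HasSum (fun j : ℕ => w ^ (j + K + 1) / ((j + K + 1 : ℕ) : ℝ)) (logTail K w) := by
  have h := Real.hasSum_pow_div_log_of_abs_lt_one (x := w) (by rwa [abs_of_nonneg hw])
  have h2 := (hasSum_nat_add_iff' K).2 h
  have e : ∑ k ∈ Finset.Icc 1 K, w ^ k / (k : ℝ)
      = ∑ i ∈ Finset.range K, w ^ (i + 1) / ((i : ℝ) + 1) := by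
    clear h h2
    induction K with
    | zero => simp
    | succ K ih =>
      rw [Finset.sum_Icc_succ_top (by omega), Finset.sum_range_succ, ih]
      push_cast
      rfl
  rw [logTail, e]
  simpa only [Nat.cast_add, Nat.cast_one] using h2

lemma logTail_nonneg (K : ℕ) (w : ℝ) (hw : 0 ≤ w) (hw1 : w < 1) : 0 ≤ logTail K w :=
  (logTail_hasSum K w hw hw1).nonneg fun j => by positivity

lemma logTail_lower (K : ℕ) (w : ℝ) (hw : 0 ≤ w) (hw1 : w < 1) :
    w ^ (K + 1) / ((K + 1 : ℕ) : ℝ) ≤ logTail K w := by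
  have h := le_hasSum (logTail_hasSum K w hw hw1) 0 (fun j _ => by positivity)
  simpa using h

lemma logTail_upper (K : ℕ) (w : ℝ) (hw : 0 ≤ w) (hw1 : w < 1) :
    logTail K w ≤ w ^ (K + 1) / ((K + 1 : ℕ) : ℝ) * (1 - w)⁻¹ := by
  have h1 := (hasSum_geometric_of_lt_one hw hw1).mul_left (w ^ (K + 1) / ((K + 1 : ℕ) : ℝ))
  refine hasSum_le (fun j => ?_) (logTail_hasSum K w hw hw1) h1
  rw [div_mul_eq_mul_div, ← pow_add, show K + 1 + j = j + K + 1 by ring]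
  gcongr
  omega

/-! ### Counting -/

lemma count_le (c : ℕ → ℕ) (q : ℕ)
    (hc : ∀ n : ℕ, n ≠ 0 → ∑ d ∈ n.divisors, d * c d = q ^ n) (d : ℕ) (hd : d ≠ 0) :
    d * c d ≤ q ^ d := by
  rw [← hc d hd]
  exact Finset.single_le_sum (f := fun d => d * c d) (fun _ _ => Nat.zero_le _)
    (Nat.mem_divisors_self d hd)

lemma count_ge (c : ℕ → ℕ) (q : ℕ) (hq : 2 ≤ q)
    (hc : ∀ n : ℕ, n ≠ 0 → ∑ d ∈ n.divisors, d * c d = q ^ n) (m : ℕ) (hm : 3 ≤ m) :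
    q ^ m ≤ 2 * (m * c m) := by
  have h1 := hc m (by omega)
  rw [← Nat.insert_self_properDivisors (by omega),
    Finset.sum_insert Nat.self_notMem_properDivisors] at h1
  have h2 : ∑ d ∈ m.properDivisors, d * c d ≤ ∑ d ∈ Finset.range (m / 2 + 1), q ^ d := by
    calc _ ≤ ∑ d ∈ m.properDivisors, q ^ d := by
          apply Finset.sum_le_sum
          intro d hd
          apply count_le c q hc
          exact (Nat.pos_of_mem_properDivisors hd).ne'
      _ ≤ _ := by
          apply Finset.sum_le_sum_of_subset
          intro d hd
          rw [Nat.mem_properDivisors] at hd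
          obtain ⟨⟨k, rfl⟩, hlt⟩ := hd
          rw [Finset.mem_range]
          have : 2 ≤ k := by
            by_contra hk
            have : k = 0 ∨ k = 1 := by omega
            rcases this with rfl | rfl <;> omega
          have : d * 2 ≤ d * k := Nat.mul_le_mul_left d this
          omega
  have h3 : ∑ d ∈ Finset.range (m / 2 + 1), q ^ d < q ^ (m / 2 + 1) :=
    Nat.geomSum_lt hq (fun k hk => Finset.mem_range.1 hk)
  have h4 : 2 * q ^ (m / 2 + 1) ≤ q ^ m := by
    calc 2 * q ^ (m / 2 + 1) ≤ q * q ^ (m / 2 + 1) := Nat.mul_le_mul_right _ hq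
      _ = q ^ (m / 2 + 2) := by ring
      _ ≤ q ^ m := Nat.pow_le_pow_right (by omega) (by omega)
  omega

lemma sum_rearrange (c : ℕ → ℕ) (q : ℕ)
    (hc : ∀ n : ℕ, n ≠ 0 → ∑ d ∈ n.divisors, d * c d = q ^ n) (m : ℕ) (y : ℝ) :
    ∑ i ∈ Finset.Icc 1 m, (y * q) ^ i / (i : ℝ) =
      ∑ d ∈ Finset.Icc 1 m, (c d : ℝ) * ∑ k ∈ Finset.Icc 1 (m / d), (y ^ d) ^ k / (k : ℝ) := by
  have h1 : ∀ i ∈ Finset.Icc 1 m, (y * q) ^ i / (i : ℝ) =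
      ∑ d ∈ Finset.Icc 1 m, if d ∣ i then y ^ i / (i : ℝ) * (d * c d) else 0 := by
    intro i hi
    rw [Finset.mem_Icc] at hi
    have h2 : ((q : ℝ)) ^ i = ∑ d ∈ i.divisors, (d : ℝ) * c d := by
      have := hc i (by omega)
      exact_mod_cast this.symm
    rw [mul_pow, h2, ← Finset.sum_filter, mul_div_right_comm, Finset.mul_sum]
    apply Finset.sum_congr _ (fun _ _ => rfl)
    ext d
    rw [Nat.mem_divisors, Finset.mem_filter, Finset.mem_Icc]
    constructor
    · rintro ⟨h, _⟩
      have := Nat.le_of_dvd (by omega) h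
      have := Nat.pos_of_dvd_of_pos h (by omega)
      exact ⟨⟨by omega, by omega⟩, h⟩
    · rintro ⟨_, h⟩
      exact ⟨h, by omega⟩
  rw [Finset.sum_congr rfl h1, Finset.sum_comm]
  apply Finset.sum_congr rfl
  intro d hd
  rw [Finset.mem_Icc] at hd
  rw [← Finset.sum_filter, Finset.mul_sum]
  symm
  apply Finset.sum_bij (fun k _ => d * k)
  · intro k hk
    rw [Finset.mem_Icc] at hk
    rw [Finset.mem_filter, Finset.mem_Icc]
    have h3 : d * k ≤ m := by
      rw [mul_comm]; exact (Nat.le_div_iff_mul_le (by omega)).1 hk.2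
    exact ⟨⟨Nat.mul_pos (by omega) (by omega), h3⟩, dvd_mul_right d k⟩
  · intro a _ b _ h
    exact Nat.eq_of_mul_eq_mul_left (by omega) h
  · intro i hi
    rw [Finset.mem_filter, Finset.mem_Icc] at hi
    obtain ⟨⟨hi1, hi2⟩, k, rfl⟩ := hi
    refine ⟨k, ?_, rfl⟩
    rw [Finset.mem_Icc]
    refine ⟨Nat.pos_of_ne_zero ?_, (Nat.le_div_iff_mul_le (by omega)).2 (by rwa [mul_comm])⟩
    rintro rfl
    simp at hi1
  · intro k hk
    rw [Finset.mem_Icc] at hk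
    have hd0 : (d : ℝ) ≠ 0 := by have : d ≠ 0 := by omega
                                 exact_mod_cast this
    have hk0 : (k : ℝ) ≠ 0 := by have : k ≠ 0 := by omega
                                 exact_mod_cast this
    rw [← pow_mul]
    push_cast
    field_simp

/-! ### Core estimates.  Here `y = x / q`. -/

/-- The saddle point cannot be small. -/
lemma core_small (c : ℕ → ℕ) (q : ℕ) (hq : 2 ≤ q)
    (hc : ∀ n : ℕ, n ≠ 0 → ∑ d ∈ n.divisors, d * c d = q ^ n) (m : ℕ) (y r A : ℝ)
    (hy : 0 < y) (hr : r < q) (hyr : y * q ≤ r) (hA : 0 ≤ A) (hAr : A + r ≤ A * r) :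
    ∑ d ∈ Finset.Icc 1 m, (d : ℝ) * c d * (y ^ d / (1 - y ^ d)) ≤ A / (1 - r / q) * r ^ m := by
  have hq0 : (0 : ℝ) < q := by positivity
  have hr0 : 0 < r := lt_of_lt_of_le (by positivity) hyr
  have ha : 0 < 1 - r / q := by
    have := (div_lt_one hq0).2 hr
    linarith
  have hy1 : y ≤ r / q := by rwa [le_div_iff₀ hq0]
  have hg := geom_bound A r hr0 hA hAr m
  calc _ ≤ ∑ d ∈ Finset.Icc 1 m, r ^ d / (1 - r / q) := by
        apply Finset.sum_le_sum
        intro d hd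
        rw [Finset.mem_Icc] at hd
        have h1 : ((d : ℝ) * c d) ≤ (q : ℝ) ^ d := by
          exact_mod_cast count_le c q hc d (by omega)
        have h2 : y ^ d ≤ r / q := by
          calc y ^ d ≤ y ^ 1 := pow_le_pow_of_le_one hy.le (by linarith) hd.1
            _ ≤ r / q := by rwa [pow_one]
        have h2' : 0 ≤ y ^ d / (1 - y ^ d) := div_nonneg (by positivity) (by linarith)
        calc (d : ℝ) * c d * (y ^ d / (1 - y ^ d)) ≤ (q : ℝ) ^ d * (y ^ d / (1 - r / q)) := by
              gcongr
          _ = (y * q) ^ d / (1 - r / q) := by rw [mul_pow]; ring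
          _ ≤ _ := by gcongr
    _ = (∑ d ∈ Finset.Icc 1 m, r ^ d) / (1 - r / q) := by rw [Finset.sum_div]
    _ ≤ (A * r ^ m) / (1 - r / q) := by gcongr
    _ = _ := by ring

/-- If `y ^ m ≤ 1 / 2` then `n ≪ x ^ m`. -/
lemma core_large (c : ℕ → ℕ) (q : ℕ) (hq : 2 ≤ q)
    (hc : ∀ n : ℕ, n ≠ 0 → ∑ d ∈ n.divisors, d * c d = q ^ n) (m : ℕ) (y A : ℝ)
    (hy : 0 < y) (hy1 : y < 1) (hA : 0 ≤ A) (hAr : A + y * q ≤ A * (y * q))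
    (hym : y ^ m ≤ 1 / 2) :
    ∑ d ∈ Finset.Icc 1 m, (d : ℝ) * c d * (y ^ d / (1 - y ^ d)) ≤ 2 * A ^ 2 * (y * q) ^ m := by
  have hq0 : (0 : ℝ) < q := by positivity
  have hx : 0 < y * q := by positivity
  have hg := geom_bound2 A (y * q) hx hA hAr m
  calc _ ≤ ∑ d ∈ Finset.Icc 1 m, 2 * (((m : ℝ) + 1 - d) * (y * q) ^ d) := by
        apply Finset.sum_le_sum
        intro d hd
        rw [Finset.mem_Icc] at hd
        have h1 : ((d : ℝ) * c d) ≤ (q : ℝ) ^ d := by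
          exact_mod_cast count_le c q hc d (by omega)
        have hd1 : (1 : ℝ) ≤ d := by exact_mod_cast hd.1
        have hdm : (d : ℝ) ≤ m := by exact_mod_cast hd.2
        have hyd : y ^ d < 1 := pow_lt_one₀ hy.le hy1 (by omega)
        have hb := bern2 y hy.le hy1.le m d hd.2
        have h2 : 1 / (1 - y ^ d) ≤ 2 * ((m : ℝ) + 1 - d) := by
          rw [div_le_iff₀ (by linarith)]
          have h3 : (m : ℝ) ≤ d * (m + 1 - d) := by nlinarith
          have h4 : (d : ℝ) ≤ 2 * (m * (1 - y ^ d)) := by nlinarith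
          have h5 : (d : ℝ) * 1 ≤ d * (2 * ((m : ℝ) + 1 - d) * (1 - y ^ d)) := by
            calc (d : ℝ) * 1 ≤ 2 * (m * (1 - y ^ d)) := by linarith
              _ ≤ 2 * ((d * (m + 1 - d)) * (1 - y ^ d)) := by
                  have : 0 ≤ 1 - y ^ d := by linarith
                  gcongr
              _ = _ := by ring
          exact le_of_mul_le_mul_left h5 (by linarith)
        calc (d : ℝ) * c d * (y ^ d / (1 - y ^ d))
            = (d : ℝ) * c d * (y ^ d * (1 / (1 - y ^ d))) := by ring
          _ ≤ (q : ℝ) ^ d * (y ^ d * (2 * ((m : ℝ) + 1 - d))) := by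
              have : 0 ≤ 1 / (1 - y ^ d) := by
                apply one_div_nonneg.2; linarith
              gcongr
          _ = _ := by rw [mul_pow]; ring
    _ = 2 * ∑ d ∈ Finset.Icc 1 m, (((m : ℝ) + 1 - d) * (y * q) ^ d) := by rw [Finset.mul_sum]
    _ ≤ 2 * (A ^ 2 * (y * q) ^ m) := by gcongr
    _ = _ := by ring

/-- `x ^ m ≤ 2 n`. -/
lemma core_upper_x (c : ℕ → ℕ) (q : ℕ) (hq : 2 ≤ q)
    (hc : ∀ n : ℕ, n ≠ 0 → ∑ d ∈ n.divisors, d * c d = q ^ n) (m : ℕ) (hm : 3 ≤ m) (y : ℝ)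
    (hy : 0 < y) (hy1 : y < 1) :
    (y * q) ^ m ≤ 2 * ∑ d ∈ Finset.Icc 1 m, (d : ℝ) * c d * (y ^ d / (1 - y ^ d)) := by
  have hpos : ∀ d ∈ Finset.Icc 1 m, 0 < 1 - y ^ d := by
    intro d hd
    have := pow_lt_one₀ hy.le hy1 (n := d) (by have := Finset.mem_Icc.1 hd; omega)
    linarith
  have hmm : m ∈ Finset.Icc 1 m := Finset.mem_Icc.2 ⟨by omega, le_rfl⟩
  have h1 := Finset.single_le_sum (f := fun d : ℕ => (d : ℝ) * c d * (y ^ d / (1 - y ^ d)))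
    (fun d hd => by have := hpos d hd; positivity) hmm
  have h2 : (q : ℝ) ^ m ≤ 2 * (m * c m) := by exact_mod_cast count_ge c q hq hc m hm
  have h3 : y ^ m ≤ y ^ m / (1 - y ^ m) := by
    rw [le_div_iff₀ (hpos m hmm)]
    have : 0 < y ^ m := by positivity
    nlinarith
  calc (y * q) ^ m = (q : ℝ) ^ m * y ^ m := by rw [mul_pow]; ring
    _ ≤ (2 * (m * c m)) * (y ^ m / (1 - y ^ m)) := by gcongr
    _ = 2 * (m * c m * (y ^ m / (1 - y ^ m))) := by ring
    _ ≤ _ := by linarith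

/-- Lower bound for `log G`. -/
lemma core_lower (c : ℕ → ℕ) (q : ℕ) (hq : 2 ≤ q)
    (hc : ∀ n : ℕ, n ≠ 0 → ∑ d ∈ n.divisors, d * c d = q ^ n) (m : ℕ) (hm : 3 ≤ m) (y : ℝ)
    (hy : 0 < y) (hy1 : y < 1) :
    ((y * q) ^ m) ^ 2 / (4 * (m * (q : ℝ) ^ m)) ≤
      ∑ d ∈ Finset.Icc 1 m, (c d : ℝ) * logTail (m / d) (y ^ d) := by
  have hlt : ∀ d ∈ Finset.Icc 1 m, y ^ d < 1 := by
    intro d hd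
    exact pow_lt_one₀ hy.le hy1 (n := d) (by have := Finset.mem_Icc.1 hd; omega)
  have hmm : m ∈ Finset.Icc 1 m := Finset.mem_Icc.2 ⟨by omega, le_rfl⟩
  have h1 := Finset.single_le_sum (f := fun d : ℕ => (c d : ℝ) * logTail (m / d) (y ^ d))
    (fun d hd => mul_nonneg (Nat.cast_nonneg _)
      (logTail_nonneg _ _ (by positivity) (hlt d hd))) hmm
  have h2 : (q : ℝ) ^ m ≤ 2 * (m * c m) := by exact_mod_cast count_ge c q hq hc m hm
  have h3 := logTail_lower (m / m) (y ^ m) (by positivity) (hlt m hmm)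
  refine le_trans ?_ h1
  have hm0 : (0 : ℝ) < m := by have : 0 < m := by omega
                               exact_mod_cast this
  have hq0 : (0 : ℝ) < q := by positivity
  have h4 : (q : ℝ) ^ m / (2 * m) ≤ c m := by
    rw [div_le_iff₀ (by positivity)]; linarith
  calc ((y * q) ^ m) ^ 2 / (4 * (m * (q : ℝ) ^ m))
      = (q : ℝ) ^ m / (2 * m) * ((y ^ m) ^ (m / m + 1) / ((m / m + 1 : ℕ) : ℝ)) := by
        rw [Nat.div_self (by omega), mul_pow]
        push_cast
        field_simp
        norm_num
    _ ≤ _ := by gcongr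

/-- Upper bound for `log G`. -/
lemma core_upper (c : ℕ → ℕ) (q : ℕ) (hq : 2 ≤ q)
    (hc : ∀ n : ℕ, n ≠ 0 → ∑ d ∈ n.divisors, d * c d = q ^ n) (m : ℕ) (hm : 3 ≤ m) (y B : ℝ)
    (hy : 0 < y) (hy1 : y < 1) (hB : 0 ≤ B) (hsq : 1 ≤ y * (y * q))
    (hBt : B + y * (y * q) ≤ B * (y * (y * q))) :
    ∑ d ∈ Finset.Icc 1 m, (c d : ℝ) * logTail (m / d) (y ^ d) ≤
      (B + q) * (((y * q) ^ m) ^ 2 / (m * (q : ℝ) ^ m)) * (1 / (1 - y)) := by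
  have hm0 : (0 : ℝ) < m := by have : 0 < m := by omega
                               exact_mod_cast this
  have hq0 : (0 : ℝ) < q := by positivity
  have hq1 : (1 : ℝ) ≤ q := by have : 1 ≤ q := by omega
                               exact_mod_cast this
  have h1y : 0 < 1 - y := by linarith
  have hterm : ∀ d ∈ Finset.Icc 1 m, (c d : ℝ) * logTail (m / d) (y ^ d) ≤
      1 / (m * (1 - y)) * ((y * (y * q)) ^ d + if d ≤ m / 2 then (q : ℝ) ^ d * y ^ m else 0) := by
    intro d hd
    rw [Finset.mem_Icc] at hd
    have hlt : y ^ d < 1 := pow_lt_one₀ hy.le hy1 (by omega)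
    have hle : y ^ d ≤ y := by
      calc y ^ d ≤ y ^ 1 := pow_le_pow_of_le_one hy.le (by linarith) hd.1
        _ = y := pow_one y
    have h1 : ((d : ℝ) * c d) ≤ (q : ℝ) ^ d := by
      exact_mod_cast count_le c q hc d (by omega)
    have hT := logTail_upper (m / d) (y ^ d) (by positivity) hlt
    have hd0 : (0 : ℝ) < d := by exact_mod_cast hd.1
    set K := m / d with hK
    have hK1 : 1 ≤ K := (Nat.le_div_iff_mul_le (by omega)).2 (by omega)
    have hdK : m ≤ d * (K + 1) := (Nat.lt_mul_div_succ m (by omega)).le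
    have hdK' : (m : ℝ) ≤ d * ((K + 1 : ℕ) : ℝ) := by exact_mod_cast hdK
    have hKpos : (0 : ℝ) < ((K + 1 : ℕ) : ℝ) := by positivity
    have hcK : (c d : ℝ) / ((K + 1 : ℕ) : ℝ) ≤ (q : ℝ) ^ d / m := by
      rw [div_le_div_iff₀ hKpos hm0]
      calc (c d : ℝ) * m ≤ c d * (d * ((K + 1 : ℕ) : ℝ)) := by gcongr
        _ = (d * c d) * ((K + 1 : ℕ) : ℝ) := by ring
        _ ≤ _ := by gcongr
    have hpow : (q : ℝ) ^ d * (y ^ d) ^ (K + 1) ≤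
        (y * (y * q)) ^ d + if d ≤ m / 2 then (q : ℝ) ^ d * y ^ m else 0 := by
      split_ifs with h
      · have h5 : (y ^ d) ^ (K + 1) ≤ y ^ m := by
          rw [← pow_mul]
          exact pow_le_pow_of_le_one hy.le hy1.le hdK
        have h6 : 0 ≤ (y * (y * q)) ^ d := by positivity
        have h7 : (q : ℝ) ^ d * (y ^ d) ^ (K + 1) ≤ (q : ℝ) ^ d * y ^ m := by gcongr
        linarith
      · have h5 : (y ^ d) ^ (K + 1) ≤ (y ^ d) ^ 2 :=
          pow_le_pow_of_le_one (by positivity) hlt.le (by omega)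
        calc (q : ℝ) ^ d * (y ^ d) ^ (K + 1) ≤ (q : ℝ) ^ d * (y ^ d) ^ 2 := by gcongr
          _ = _ := by rw [mul_pow, mul_pow]; ring
    calc (c d : ℝ) * logTail K (y ^ d)
        ≤ c d * ((y ^ d) ^ (K + 1) / ((K + 1 : ℕ) : ℝ) * (1 - y ^ d)⁻¹) := by gcongr
      _ ≤ c d * ((y ^ d) ^ (K + 1) / ((K + 1 : ℕ) : ℝ) * (1 - y)⁻¹) := by gcongr
      _ = (c d : ℝ) / ((K + 1 : ℕ) : ℝ) * ((y ^ d) ^ (K + 1) * (1 - y)⁻¹) := by ring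
      _ ≤ (q : ℝ) ^ d / m * ((y ^ d) ^ (K + 1) * (1 - y)⁻¹) := by gcongr
      _ = 1 / (m * (1 - y)) * ((q : ℝ) ^ d * (y ^ d) ^ (K + 1)) := by field_simp
      _ ≤ _ := by gcongr
  have hS1 := geom_bound B (y * (y * q)) (by positivity) hB hBt m
  have hS2 : ∑ d ∈ Finset.Icc 1 m, (if d ≤ m / 2 then (q : ℝ) ^ d * y ^ m else 0) ≤
      q * (y * (y * q)) ^ m := by
    rw [← Finset.sum_filter, ← Finset.sum_mul]
    have h3 : ∑ d ∈ Finset.range (m / 2 + 1), q ^ d < q ^ (m / 2 + 1) :=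
      Nat.geomSum_lt hq (fun k hk => Finset.mem_range.1 hk)
    have h4 : ∑ d ∈ Finset.Icc 1 m with d ≤ m / 2, q ^ d ≤ q ^ (m / 2 + 1) := by
      refine le_trans (Finset.sum_le_sum_of_subset ?_) h3.le
      intro d hd
      rw [Finset.mem_filter] at hd
      rw [Finset.mem_range]
      omega
    have h5 : ∑ d ∈ Finset.Icc 1 m with d ≤ m / 2, (q : ℝ) ^ d ≤ (q : ℝ) ^ (m / 2 + 1) := by
      exact_mod_cast h4
    have h6 : (q : ℝ) ^ (m / 2) ≤ (y * q) ^ m := by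
      apply le_of_sq_le_sq _ (by positivity)
      calc ((q : ℝ) ^ (m / 2)) ^ 2 = (q : ℝ) ^ (m / 2 * 2) := by rw [pow_mul]
        _ ≤ (q : ℝ) ^ m := pow_le_pow_right₀ hq1 (by omega)
        _ = 1 ^ m * (q : ℝ) ^ m := by rw [one_pow, one_mul]
        _ ≤ (y * (y * q)) ^ m * (q : ℝ) ^ m := by gcongr
        _ = ((y * q) ^ m) ^ 2 := by simp only [mul_pow]; ring
    calc (∑ d ∈ Finset.Icc 1 m with d ≤ m / 2, (q : ℝ) ^ d) * y ^ m
        ≤ (q : ℝ) ^ (m / 2 + 1) * y ^ m := by gcongr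
      _ = (q : ℝ) ^ (m / 2) * (q * y ^ m) := by ring
      _ ≤ (y * q) ^ m * (q * y ^ m) := by gcongr
      _ = _ := by simp only [mul_pow]; ring
  calc _ ≤ ∑ d ∈ Finset.Icc 1 m, 1 / (m * (1 - y)) *
        ((y * (y * q)) ^ d + if d ≤ m / 2 then (q : ℝ) ^ d * y ^ m else 0) :=
        Finset.sum_le_sum hterm
    _ = 1 / (m * (1 - y)) * (∑ d ∈ Finset.Icc 1 m, (y * (y * q)) ^ d +
        ∑ d ∈ Finset.Icc 1 m, (if d ≤ m / 2 then (q : ℝ) ^ d * y ^ m else 0)) := by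
        rw [← Finset.mul_sum, Finset.sum_add_distrib]
    _ ≤ 1 / (m * (1 - y)) * (B * (y * (y * q)) ^ m + q * (y * (y * q)) ^ m) := by gcongr
    _ = _ := by
        simp only [mul_pow]
        field_simp

/-- The logarithm of `G`. -/
lemma log_Gq (F : Type) [Field F] [Fintype F] (m : ℕ) (x : ℝ) (hx : 0 < x)
    (hxq : x < (Fintype.card F : ℝ)) :
    Real.log (Gq F m x) = ∑ d ∈ Finset.Icc 1 m, (irrCount F d : ℝ) *
      logTail (m / d) ((x / (Fintype.card F : ℝ)) ^ d) := by
  have hq : (0 : ℝ) < Fintype.card F := hx.trans hxq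
  obtain ⟨h1, h2⟩ := log_FqFun F m x hx hxq
  have h3 := sum_rearrange (irrCount F) (Fintype.card F) (sum_irrCount F) m
    (x / (Fintype.card F : ℝ))
  rw [div_mul_cancel₀ _ hq.ne'] at h3
  rw [Gq, Real.log_mul h1.ne' (Real.exp_ne_zero _), Real.log_exp, h2, h3, ← sub_eq_add_neg,
    ← Finset.sum_sub_distrib]
  apply Finset.sum_congr rfl
  intro d _
  rw [logTail]
  ring

lemma ratio_bound (r x : ℝ) (hr : 1 < r) (hx : r ≤ x) : r / (r - 1) + x ≤ r / (r - 1) * x := by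
  have h : 0 < r - 1 := by linarith
  rw [div_add' _ _ _ h.ne', div_mul_eq_mul_div]
  apply div_le_div_of_nonneg_right _ h.le
  nlinarith

lemma large_n (q : ℝ) (hq : 1 < q) (C η : ℝ) (hη : 0 < η) :
    ∃ N : ℕ, ∀ n : ℕ, N ≤ n → 1 ≤ n ∧ C * (n : ℝ) ^ (1 - η) < n ∧
      2 < 3 / 4 * Real.log n / Real.log q := by
  have hL : 0 < Real.log q := Real.log_pos hq
  have h1 := ((tendsto_rpow_atTop hη).comp tendsto_natCast_atTop_atTop).eventually_gt_atTop C
  have h2 := (Real.tendsto_log_atTop.comp tendsto_natCast_atTop_atTop).eventually_gt_atTop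
    (2 * Real.log q * (4 / 3))
  obtain ⟨N, hN⟩ := Filter.eventually_atTop.1
    ((h1.and h2).and (Filter.eventually_ge_atTop (1 : ℕ)))
  refine ⟨N, fun n hn => ?_⟩
  obtain ⟨⟨a, b⟩, d⟩ := hN n hn
  simp only [Function.comp_apply] at a b
  have hn0 : (0 : ℝ) < n := by exact_mod_cast d
  refine ⟨d, ?_, ?_⟩
  · have e : (n : ℝ) = (n : ℝ) ^ η * (n : ℝ) ^ (1 - η) := by
      rw [← Real.rpow_add hn0]; simp
    have hp : 0 < (n : ℝ) ^ (1 - η) := Real.rpow_pos_of_pos hn0 _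
    calc C * (n : ℝ) ^ (1 - η) < (n : ℝ) ^ η * (n : ℝ) ^ (1 - η) := by gcongr
      _ = n := e.symm
  · rw [lt_div_iff₀ hL]
    linarith

/-- Fix a prime power `q` (the cardinality of a finite field `F`) and
`ε ∈ (0,1/2)`. There exist `c, C > 0` and `N` such that for all `n ≥ N` and
`(3/4)·log_q n ≤ m ≤ (2−ε)·log_q n`, one has
`c·(min{n,q^m})²/(m·q^m) ≤ log G_q(x_q) ≤ C·(min{n,q^m})²/(m·q^m)·1/(1 − x_q/q)`. -/
theorem stmt15 :
    ∀ (F : Type) [Field F] [Fintype F], ∀ ε : ℝ, 0 < ε → ε < 1 / 2 →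
      ∃ c C : ℝ, 0 < c ∧ 0 < C ∧ ∃ N : ℕ, ∀ n : ℕ, N ≤ n → ∀ m : ℕ,
      (3 / 4) * Real.log n / Real.log (Fintype.card F) ≤ (m : ℝ) →
      (m : ℝ) ≤ (2 - ε) * Real.log n / Real.log (Fintype.card F) →
      ∀ xq : ℝ, 0 < xq → xq < (Fintype.card F : ℝ) →
      xq * deriv (FqFun F m) xq / FqFun F m xq = (n : ℝ) →
      c * (min (n : ℝ) ((Fintype.card F : ℝ) ^ m)) ^ 2 /
          ((m : ℝ) * (Fintype.card F : ℝ) ^ m) ≤ Real.log (Gq F m xq) ∧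
        Real.log (Gq F m xq) ≤
          C * (min (n : ℝ) ((Fintype.card F : ℝ) ^ m)) ^ 2 /
            ((m : ℝ) * (Fintype.card F : ℝ) ^ m) *
            (1 / (1 - xq / (Fintype.card F : ℝ))) := by
  
  intro F _ _ ε hε hε2
  have hq : 2 ≤ Fintype.card F := Fintype.one_lt_card
  have hc := sum_irrCount F
  have hq1 : (1 : ℝ) < (Fintype.card F : ℝ) := by exact_mod_cast hq
  have hL : 0 < Real.log (Fintype.card F : ℝ) := Real.log_pos hq1
  obtain ⟨r, hrdef⟩ : ∃ r : ℝ, r = (Fintype.card F : ℝ) ^ (1 / 2 + ε / 4) := ⟨_, rfl⟩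
  obtain ⟨s, hsdef⟩ : ∃ s : ℝ, s = (Fintype.card F : ℝ) ^ (ε / 2) := ⟨_, rfl⟩
  have hr1 : 1 < r := by rw [hrdef]; exact Real.one_lt_rpow hq1 (by linarith)
  have hs1 : 1 < s := by rw [hsdef]; exact Real.one_lt_rpow hq1 (by linarith)
  have hrq : r < (Fintype.card F : ℝ) := by
    rw [hrdef]
    calc (Fintype.card F : ℝ) ^ (1 / 2 + ε / 4) < (Fintype.card F : ℝ) ^ (1 : ℝ) :=
          Real.rpow_lt_rpow_of_exponent_lt hq1 (by linarith)
      _ = _ := Real.rpow_one _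
  have hrs : r * r = s * (Fintype.card F : ℝ) := by
    have hq0 : (0 : ℝ) < (Fintype.card F : ℝ) := by linarith
    rw [hrdef, hsdef, ← Real.rpow_add hq0]
    nth_rw 3 [← Real.rpow_one (Fintype.card F : ℝ)]
    rw [← Real.rpow_add hq0]
    congr 1
    ring
  have hrm : ∀ n m : ℕ, 1 ≤ n →
      (m : ℝ) ≤ (2 - ε) * Real.log n / Real.log (Fintype.card F) →
      r ^ m ≤ (n : ℝ) ^ (1 - ε ^ 2 / 4) := by
    intro n m hn hm
    have hn0 : (0 : ℝ) < n := by exact_mod_cast hn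
    rw [le_div_iff₀ hL] at hm
    have hq0 : (0 : ℝ) < (Fintype.card F : ℝ) := by linarith
    rw [hrdef, ← Real.rpow_natCast, ← Real.rpow_mul hq0.le, Real.rpow_def_of_pos hq0,
      Real.rpow_def_of_pos hn0]
    apply Real.exp_le_exp.2
    calc _ = (1 / 2 + ε / 4) * (m * Real.log (Fintype.card F : ℝ)) := by ring
      _ ≤ (1 / 2 + ε / 4) * ((2 - ε) * Real.log n) := by gcongr
      _ = _ := by ring
  clear hrdef hsdef
  generalize hQ : Fintype.card F = Q at *
  have hq0 : (0 : ℝ) < (Q : ℝ) := by linarith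
  set A : ℝ := r / (r - 1) with hAdef
  set B : ℝ := s / (s - 1) with hBdef
  have hA1 : 1 ≤ A := by
    rw [hAdef, le_div_iff₀ (by linarith)]; linarith
  have hB0 : 0 ≤ B := div_nonneg (by linarith) (by linarith)
  obtain ⟨N, hN⟩ := large_n (Q : ℝ) hq1 (A / (1 - r / Q)) (ε ^ 2 / 4) (by positivity)
  refine ⟨1 / (16 * A ^ 4), 4 * (B + Q), by positivity, by positivity, N, ?_⟩
  intro n hn m hm1 hm2 x hx0 hxq hsad
  obtain ⟨hn1, hnC, hnL⟩ := hN n hn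
  have hm : 3 ≤ m := by
    have : (2 : ℝ) < m := by linarith
    exact_mod_cast this
  have hm0 : (0 : ℝ) < m := by
    have : 0 < m := by omega
    exact_mod_cast this
  have hld := FqFun_logDeriv F m x hx0 (by rwa [hQ])
  rw [log_Gq F m x hx0 (by rwa [hQ])]
  rw [hsad] at hld
  simp only [hQ] at hld ⊢
  obtain ⟨y, hydef⟩ : ∃ y : ℝ, y = x / Q := ⟨_, rfl⟩
  have hxy : y * Q = x := by rw [hydef]; field_simp
  rw [← hydef] at hld ⊢
  have hy0 : 0 < y := by rw [hydef]; positivity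
  have hy1 : y < 1 := by rw [hydef]; exact (div_lt_one hq0).2 hxq
  have hxr : r ≤ x := by
    by_contra hlt
    push Not at hlt
    have h1 := core_small (irrCount F) Q hq hc m y r A hy0 hrq (by rw [hxy]; exact hlt.le)
      (by linarith) (ratio_bound r r hr1 le_rfl)
    rw [← hld] at h1
    have h2 : 0 < 1 - r / Q := by
      have := (div_lt_one hq0).2 hrq
      linarith
    have h3 : A / (1 - r / Q) * r ^ m ≤ A / (1 - r / Q) * (n : ℝ) ^ (1 - ε ^ 2 / 4) := by
      have := hrm n m hn1 hm2
      gcongr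
    linarith
  have hmin0 : 0 ≤ min (n : ℝ) ((Q : ℝ) ^ m) := le_min (Nat.cast_nonneg _) (by positivity)
  constructor
  · refine le_trans ?_ (core_lower (irrCount F) Q hq hc m hm y hy0 hy1)
    have key : min (n : ℝ) ((Q : ℝ) ^ m) ≤ 2 * A ^ 2 * (y * Q) ^ m := by
      by_cases hym : y ^ m ≤ 1 / 2
      · refine (min_le_left _ _).trans ?_
        rw [hld]
        exact core_large (irrCount F) Q hq hc m y A hy0 hy1 (by linarith)
          (by rw [hxy]; exact ratio_bound r x hr1 hxr) hym
      · push Not at hym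
        refine (min_le_right _ _).trans ?_
        have hA2 : 1 ≤ A ^ 2 := one_le_pow₀ hA1
        calc (Q : ℝ) ^ m = 2 * 1 * ((1 / 2) * (Q : ℝ) ^ m) := by ring
          _ ≤ 2 * A ^ 2 * (y ^ m * (Q : ℝ) ^ m) := by gcongr
          _ = _ := by rw [mul_pow]
    calc 1 / (16 * A ^ 4) * min (n : ℝ) ((Q : ℝ) ^ m) ^ 2 / (m * (Q : ℝ) ^ m)
        ≤ 1 / (16 * A ^ 4) * (2 * A ^ 2 * (y * Q) ^ m) ^ 2 / (m * (Q : ℝ) ^ m) := by gcongr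
      _ = _ := by field_simp; norm_num
  · have hs : s ≤ y * (y * Q) := by
      have h1 : s * Q ≤ x * x := by
        rw [← hrs]; exact mul_le_mul hxr hxr (by linarith) hx0.le
      rw [hxy, hydef, div_mul_eq_mul_div, le_div_iff₀ hq0]
      exact h1
    refine (core_upper (irrCount F) Q hq hc m hm y B hy0 hy1 hB0 (by linarith)
      (ratio_bound s _ hs1 hs)).trans ?_
    have key : (y * Q) ^ m ≤ 2 * min (n : ℝ) ((Q : ℝ) ^ m) := by
      rw [mul_min_of_nonneg _ _ (by norm_num)]
      refine le_min ?_ ?_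
      · rw [hld]; exact core_upper_x (irrCount F) Q hq hc m hm y hy0 hy1
      · have h1 : (y * Q) ^ m ≤ (Q : ℝ) ^ m := by
          rw [hxy]; gcongr
        have h2 : (0 : ℝ) < (Q : ℝ) ^ m := by positivity
        linarith
    have h1y : 0 < 1 - y := by linarith
    have hBQ : 0 ≤ B + Q := by positivity
    calc (B + Q) * (((y * Q) ^ m) ^ 2 / (m * (Q : ℝ) ^ m)) * (1 / (1 - y))
        ≤ (B + Q) * ((2 * min (n : ℝ) ((Q : ℝ) ^ m)) ^ 2 / (m * (Q : ℝ) ^ m)) * (1 / (1 - y)) := by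
          gcongr
      _ = _ := by ring
end

section
/- There exist absolute constants c, C > 0 such that for all integers n ≥ m ≥ 1, writing u = n/m, the saddle point x satisfies x ≥ c·n^{1/m}, the quantity λ = ∑_{i=1}^{m} i·x^i satisfies c·n·m ≤ λ ≤ n·m, and moreover | λ/(n·m) − 1 | ≤ C / max{ log u, n^{1/m} }. -/
open Real

theorem aux_sum_le (x : ℝ) (hx : 1 ≤ x) (m : ℕ) :
    (∑ i ∈ Finset.Icc 1 m, x ^ i) ≤ m * x ^ m := by
  have h := Finset.sum_le_card_nsmul (Finset.Icc 1 m) (fun i => x ^ i) (x ^ m) (by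
    intro i hi
    exact pow_le_pow_right₀ hx (Finset.mem_Icc.mp hi).2)
  simpa using h

theorem aux_geom (x : ℝ) (m : ℕ) :
    (x - 1) * (∑ i ∈ Finset.Icc 1 m, x ^ i) = x ^ (m + 1) - x := by
  induction m with
  | zero => simp
  | succ k ih =>
    rw [Finset.sum_Icc_succ_top (by omega), mul_add, ih]
    ring

theorem aux_ident (x : ℝ) (m : ℕ) :
    (x - 1) * (m * (∑ i ∈ Finset.Icc 1 m, x ^ i) - ∑ i ∈ Finset.Icc 1 m, (i : ℝ) * x ^ i)
      = (∑ i ∈ Finset.Icc 1 m, x ^ i) - m * x := by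
  induction m with
  | zero => simp
  | succ k ih =>
    rw [Finset.sum_Icc_succ_top (by omega), Finset.sum_Icc_succ_top (by omega)]
    have hg := aux_geom x k
    push_cast
    linear_combination ih + hg

theorem aux_cheb (x : ℝ) (hx : 1 ≤ x) (m : ℕ) :
    (m + 1) * (∑ i ∈ Finset.Icc 1 m, x ^ i) ≤ 2 * ∑ i ∈ Finset.Icc 1 m, (i : ℝ) * x ^ i := by
  induction m with
  | zero => simp
  | succ k ih =>
    rw [Finset.sum_Icc_succ_top (by omega), Finset.sum_Icc_succ_top (by omega)]
    have hs := aux_sum_le x hx k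
    have hp : x ^ k ≤ x ^ (k + 1) := pow_le_pow_right₀ hx (by omega)
    have hk : (k : ℝ) * x ^ k ≤ k * x ^ (k + 1) :=
      mul_le_mul_of_nonneg_left hp (Nat.cast_nonneg k)
    push_cast
    nlinarith

/-- There exist absolute constants `c, C > 0` such that for all integers
`n ≥ m ≥ 1`, writing `u = n/m`, the saddle point `x` satisfies `x ≥ c·n^{1/m}`, the
quantity `λ = ∑_{i=1}^m i·x^i` satisfies `c·n·m ≤ λ ≤ n·m`, and moreover
`|λ/(n·m) − 1| ≤ C/max{log u, n^{1/m}}`. -/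
theorem stmt16 :
    ∃ c C : ℝ, 0 < c ∧ 0 < C ∧ ∀ n m : ℕ, 1 ≤ m → m ≤ n →
      ∀ x : ℝ, 0 < x → (∑ i ∈ Finset.Icc 1 m, x ^ i) = (n : ℝ) →
      ∀ lam : ℝ, lam = ∑ i ∈ Finset.Icc 1 m, (i : ℝ) * x ^ i →
      ∀ u : ℝ, u = (n : ℝ) / (m : ℝ) →
      c * (n : ℝ) ^ ((1 : ℝ) / (m : ℝ)) ≤ x ∧
        c * (n : ℝ) * (m : ℝ) ≤ lam ∧ lam ≤ (n : ℝ) * (m : ℝ) ∧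
        |lam / ((n : ℝ) * (m : ℝ)) - 1| ≤
          C / max (Real.log u) ((n : ℝ) ^ ((1 : ℝ) / (m : ℝ))) := by
  refine ⟨1 / 2, 4, by norm_num, by norm_num, ?_⟩
  intro n m hm hmn x hx hS lam hlam u hu
  have hm0 : (0 : ℝ) < m := by exact_mod_cast hm
  have hm1 : (1 : ℝ) ≤ m := by exact_mod_cast hm
  have hmn' : (m : ℝ) ≤ n := by exact_mod_cast hmn
  have hn0 : (0 : ℝ) < n := by linarith
  have hx1 : 1 ≤ x := by
    by_contra hlt
    push Not at hlt
    have h : (∑ i ∈ Finset.Icc 1 m, x ^ i) < ∑ i ∈ Finset.Icc 1 m, (1 : ℝ) := by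
      apply Finset.sum_lt_sum_of_nonempty
      · exact ⟨1, by simp [hm]⟩
      · intro i hi
        have := (Finset.mem_Icc.mp hi).1
        exact pow_lt_one₀ hx.le hlt (by omega)
    simp [hS] at h
    have : (m : ℝ) ≤ n := hmn'
    first
      | linarith
      | omega
  have hle := aux_sum_le x hx1 m
  have hid := aux_ident x m
  have hch := aux_cheb x hx1 m
  rw [← hlam, hS] at hid hch
  rw [hS] at hle
  have hub : lam ≤ (n : ℝ) * m := by
    rw [hlam, ← hS, Finset.sum_mul]
    apply Finset.sum_le_sum
    intro i hi
    have : (i : ℝ) ≤ m := by exact_mod_cast (Finset.mem_Icc.mp hi).2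
    have hp : 0 < x ^ i := by positivity
    nlinarith
  have hroot : (n : ℝ) ^ ((1 : ℝ) / (m : ℝ)) ≤ 2 * x := by
    have h2 : (n : ℝ) ≤ (2 * x) ^ m := by
      rw [mul_pow]
      refine hle.trans (mul_le_mul_of_nonneg_right ?_ (by positivity))
      exact_mod_cast (Nat.lt_two_pow_self (n := m)).le
    calc (n : ℝ) ^ ((1 : ℝ) / (m : ℝ)) ≤ ((2 * x) ^ m) ^ ((1 : ℝ) / (m : ℝ)) :=
          Real.rpow_le_rpow hn0.le h2 (by positivity)
      _ = 2 * x := by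
          rw [one_div]
          exact Real.pow_rpow_inv_natCast (by positivity) (by omega)
  have hu0 : 0 < u := by rw [hu]; positivity
  have hlog : Real.log u ≤ m * (x - 1) := by
    have h1 : u ≤ x ^ m := by
      rw [hu, div_le_iff₀ hm0]; linarith
    have h2 := Real.log_le_log hu0 h1
    rw [Real.log_pow] at h2
    have h3 := Real.log_le_sub_one_of_pos hx
    exact h2.trans (mul_le_mul_of_nonneg_left h3 hm0.le)
  have hnm : (0 : ℝ) < (n : ℝ) * m := by positivity
  have hrpos : 0 < (n : ℝ) ^ ((1 : ℝ) / (m : ℝ)) := Real.rpow_pos_of_pos hn0 _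
  have hlam0 : 0 ≤ lam := by nlinarith
  obtain ⟨d, hd⟩ : ∃ d, d = 1 - lam / ((n : ℝ) * m) := ⟨_, rfl⟩
  have hd0 : 0 ≤ d := by
    rw [hd, sub_nonneg, div_le_one hnm]; exact hub
  have hd1 : d ≤ 1 := by
    have : 0 ≤ lam / ((n : ℝ) * m) := by positivity
    linarith
  have hdl : d * (n * m) = n * m - lam := by
    rw [hd]; field_simp
  have hkey : d * (m * (x - 1)) ≤ 1 := by
    have h1 : (d * (m * (x - 1))) * n ≤ 1 * n := by
      have h2 : (x - 1) * (d * (n * m)) = n - m * x := by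
        rw [hdl, ← hid]; ring
      have h3 : 0 ≤ m * x := by positivity
      linarith
    exact le_of_mul_le_mul_right h1 hn0
  refine ⟨by linarith, by nlinarith, hub, ?_⟩
  have habs : |lam / ((n : ℝ) * (m : ℝ)) - 1| = d := by
    rw [abs_sub_comm, ← hd, abs_of_nonneg hd0]
  rw [habs, le_div_iff₀ (lt_max_of_lt_right hrpos), mul_max_of_nonneg _ _ hd0]
  apply max_le
  · have := mul_le_mul_of_nonneg_left hlog hd0
    linarith
  · refine (mul_le_mul_of_nonneg_left hroot hd0).trans ?_
    have h5 : d * (x - 1) ≤ d * (m * (x - 1)) := by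
      apply mul_le_mul_of_nonneg_left _ hd0
      nlinarith
    linarith
end

section
/- Suppose the integers n ≥ m ≥ 1 satisfy m ≥ √(10·n·log n), and write u = n/m. Then e^{ξ(u)/m} < 2^{1/3}, and there exists an absolute constant C > 0 such that for every prime power q one has | G_q(x)/G_q(e^{ξ(u)/m}) − 1 | ≤ C·u·(log(u+1))² / ( m²·q^{⌈(m+1)/2⌉} ). -/
open Real

section helpers

/-- For `N ≥ 1` there is a finset of all monic irreducibles of degree dividing `N`,
and the degrees add up to `q^N`. -/
theorem exists_irr_finset (F : Type) [Field F] [Fintype F] (N : ℕ) (hN : N ≠ 0) :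
    ∃ A : Finset (Polynomial F),
      (∀ p, p ∈ A ↔ (p.Monic ∧ Irreducible p ∧ p.natDegree ∣ N)) ∧
      ∑ p ∈ A, p.natDegree = Fintype.card F ^ N := by
  classical
  let f : Polynomial F := Polynomial.X ^ (Nat.card F) ^ N - Polynomial.X
  have hq : 1 < Nat.card F := Finite.one_lt_card
  have hf0 : f ≠ 0 := FiniteField.X_pow_card_pow_sub_X_ne_zero _ hN hq
  have hdeg : f.natDegree = Nat.card F ^ N :=
    FiniteField.X_pow_card_pow_sub_X_natDegree_eq _ hN hq
  obtain ⟨p, hp⟩ := CharP.exists F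
  have hpq : p ∣ Nat.card F ^ N := by
    apply dvd_pow _ hN
    rw [← CharP.cast_eq_zero_iff F p, Nat.card_eq_fintype_card]
    exact FiniteField.cast_card_eq_zero F
  have hsep : f.Separable := galois_poly_separable p _ hpq
  have hnd := (UniqueFactorizationMonoid.squarefree_iff_nodup_normalizedFactors hf0).1
    hsep.squarefree
  refine ⟨(UniqueFactorizationMonoid.normalizedFactors f).toFinset, ?_, ?_⟩
  · intro g
    rw [Multiset.mem_toFinset, Polynomial.mem_normalizedFactors_iff hf0]
    constructor
    · rintro ⟨h1, h2, h3⟩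
      exact ⟨h2, h1, h1.natDegree_dvd_iff_dvd_X_pow_card_pow_sub_X.2 h3⟩
    · rintro ⟨h1, h2, h3⟩
      exact ⟨h2, h1, h2.natDegree_dvd_iff_dvd_X_pow_card_pow_sub_X.1 h3⟩
  · have h1 := Polynomial.leadingCoeff_mul_prod_normalizedFactors f
    have h2 : (UniqueFactorizationMonoid.normalizedFactors f).prod.natDegree
        = Fintype.card F ^ N := by
      rw [← Nat.card_eq_fintype_card, ← hdeg]
      conv_rhs => rw [← h1]
      rw [Polynomial.natDegree_C_mul]
      simpa using hf0
    rw [Polynomial.natDegree_multiset_prod_of_monic] at h2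
    · rw [← h2, Finset.sum_multiset_map_count]
      apply Finset.sum_congr rfl
      intro g hg
      rw [Multiset.count_eq_one_of_mem hnd (Multiset.mem_toFinset.1 hg)]
      simp
    · intro g hg
      exact ((Polynomial.mem_normalizedFactors_iff hf0).1 hg).2.1

/-- The finset of monic irreducibles of degree at most `m`. -/
theorem exists_S (F : Type) [Field F] [Fintype F] (m : ℕ) :
    ∃ S : Finset (Polynomial F),
      ∀ p, p ∈ S ↔ (p.Monic ∧ Irreducible p ∧ p.natDegree ≤ m) := by
  classical
  obtain ⟨A, hA, -⟩ := exists_irr_finset F m.factorial (Nat.factorial_ne_zero m)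
  refine ⟨A.filter (fun p => p.natDegree ≤ m), fun p => ?_⟩
  rw [Finset.mem_filter, hA]
  constructor
  · rintro ⟨⟨h1, h2, -⟩, h3⟩
    exact ⟨h1, h2, h3⟩
  · rintro ⟨h1, h2, h3⟩
    exact ⟨⟨h1, h2, Nat.dvd_factorial h2.natDegree_pos h3⟩, h3⟩

/-- Weighted divisor counts. -/
def acoef {F : Type} [Field F] (S : Finset (Polynomial F)) (N : ℕ) : ℕ :=
  ∑ p ∈ S, if p.natDegree ∣ N then p.natDegree else 0

theorem acoef_eq {F : Type} [Field F] [Fintype F] {m : ℕ} (S : Finset (Polynomial F))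
    (hS : ∀ p, p ∈ S ↔ (p.Monic ∧ Irreducible p ∧ p.natDegree ≤ m))
    (N : ℕ) (hN : N ≠ 0) (hNm : N ≤ m) : acoef S N = Fintype.card F ^ N := by
  classical
  obtain ⟨A, hA, hs⟩ := exists_irr_finset F N hN
  rw [acoef, ← Finset.sum_filter, ← hs]
  apply Finset.sum_congr _ (fun _ _ => rfl)
  ext p
  rw [Finset.mem_filter, hA, hS]
  constructor
  · rintro ⟨⟨h1, h2, -⟩, h3⟩
    exact ⟨h1, h2, h3⟩
  · rintro ⟨h1, h2, h3⟩
    exact ⟨⟨h1, h2, (Nat.le_of_dvd (Nat.pos_of_ne_zero hN) h3).trans hNm⟩, h3⟩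

theorem geom_nat_bound (q : ℕ) (hq : 2 ≤ q) (k : ℕ) :
    ∑ d ∈ Finset.Icc 1 k, q ^ d ≤ 2 * q ^ k := by
  induction k with
  | zero => simp
  | succ k ih =>
    rw [Finset.sum_Icc_succ_top (by omega), pow_succ]
    nlinarith [pow_pos (show 0 < q by omega) k]

theorem sum_biUnion_le_nat {ι κ : Type*} [DecidableEq ι] [DecidableEq κ] (s : Finset ι)
    (t : ι → Finset κ) (f : κ → ℕ) :
    ∑ x ∈ s.biUnion t, f x ≤ ∑ i ∈ s, ∑ x ∈ t i, f x := by
  induction s using Finset.induction_on with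
  | empty => simp
  | insert a s ha ih =>
    rw [Finset.biUnion_insert, Finset.sum_insert ha]
    have := Finset.sum_union_inter (s₁ := t a) (s₂ := s.biUnion t) (f := f)
    omega

theorem acoef_le {F : Type} [Field F] [Fintype F] {m : ℕ} (S : Finset (Polynomial F))
    (hS : ∀ p, p ∈ S ↔ (p.Monic ∧ Irreducible p ∧ p.natDegree ≤ m))
    (N : ℕ) (hNm : m < N) : acoef S N ≤ 2 * Fintype.card F ^ (N / 2) := by
  classical
  choose A hA hs using exists_irr_finset F
  refine le_trans ?_ (geom_nat_bound _ Fintype.one_lt_card _)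
  let B : ℕ → Finset (Polynomial F) := fun d => if h : d ≠ 0 then A d h else ∅
  have hsub : S.filter (fun p => p.natDegree ∣ N) ⊆ (Finset.Icc 1 (N/2)).biUnion B := by
    intro p hp
    rw [Finset.mem_filter, hS] at hp
    obtain ⟨⟨h1, h2, h3⟩, k, hk⟩ := hp
    have hpos := h2.natDegree_pos
    have hk2 : 2 ≤ k := by
      by_contra hlt
      have : k = 0 ∨ k = 1 := by omega
      rcases this with rfl | rfl <;> omega
    rw [Finset.mem_biUnion]
    refine ⟨p.natDegree, ?_, ?_⟩
    · rw [Finset.mem_Icc]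
      refine ⟨hpos, ?_⟩
      rw [Nat.le_div_iff_mul_le (by norm_num)]
      nlinarith
    · have : p.natDegree ≠ 0 := by omega
      simp only [B, this, ne_eq, not_false_eq_true, dite_true, hA]
      exact ⟨h1, h2, dvd_rfl⟩
  rw [acoef, ← Finset.sum_filter]
  refine (Finset.sum_le_sum_of_subset hsub).trans ?_
  refine (sum_biUnion_le_nat (Finset.Icc 1 (N/2)) B (fun p => p.natDegree)).trans ?_
  apply Finset.sum_le_sum
  intro d hd
  have hd0 : d ≠ 0 := by have := (Finset.mem_Icc.1 hd).1; omega
  simp only [B, hd0, ne_eq, not_false_eq_true, dite_true, hs]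
  exact le_rfl

/-- Series for one Euler factor. -/
theorem hasSum_factor (t : ℝ) (d : ℕ) (hd : 0 < d) (ht0 : 0 ≤ t) (ht : t < 1) :
    HasSum (fun N : ℕ => ((if d ∣ N then d else 0 : ℕ) : ℝ) * t ^ N / N)
      (-Real.log (1 - t ^ d)) := by
  have htd : |t ^ d| < 1 := by
    rw [abs_of_nonneg (by positivity)]
    exact pow_lt_one₀ ht0 ht hd.ne'
  have h := Real.hasSum_pow_div_log_of_abs_lt_one htd
  have hinj : Function.Injective (fun k : ℕ => (k + 1) * d) := by
    intro a b hab
    have := Nat.eq_of_mul_eq_mul_right hd hab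
    omega
  rw [← hinj.hasSum_iff]
  · convert h using 2 with k
    have : (d : ℝ) ≠ 0 := by positivity
    simp only [Function.comp, dvd_mul_left, if_true]
    rw [mul_comm (k+1) d, pow_mul]
    push_cast
    field_simp
  · intro N hN
    by_cases hdN : d ∣ N
    · obtain ⟨k, rfl⟩ := hdN
      rcases k with _ | k
      · simp
      · exact absurd ⟨k, by simp [mul_comm]⟩ hN
    · simp [hdN]

/-- Series for `log G_q`. -/
theorem hasSum_logG {F : Type} [Field F] [Fintype F] {m : ℕ} (S : Finset (Polynomial F))
    (hS : ∀ p, p ∈ S ↔ (p.Monic ∧ Irreducible p ∧ p.natDegree ≤ m))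
    (z : ℝ) (hz0 : 0 ≤ z) (hz : z < 2) :
    ∃ L : ℝ, Gq F m z = Real.exp L ∧
    HasSum (fun N : ℕ => (if N ≤ m then 0 else (acoef S N : ℝ)) / (Fintype.card F : ℝ) ^ N
      * (z ^ N / N)) L := by
  classical
  set q : ℝ := (Fintype.card F : ℝ) with hq
  have hq2 : 2 ≤ q := by
    have : 2 ≤ Fintype.card F := Fintype.one_lt_card
    rw [hq]; exact_mod_cast this
  have ht0 : 0 ≤ z / q := by positivity
  have ht1 : z / q < 1 := by rw [div_lt_one (by linarith)]; linarith
  have hF : FqFun F m z = Real.exp (∑ p ∈ S, -Real.log (1 - (z/q) ^ p.natDegree)) := by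
    rw [FqFun, Real.exp_sum, finprod_mem_eq_finite_toFinset_prod _ (by
      apply S.finite_toSet.subset
      intro p hp
      exact (hS p).2 hp)]
    apply Finset.prod_congr
    · ext p
      simp [hS]
    · intro p hp
      have hp' := (hS p).1 hp
      have := pow_lt_one₀ ht0 ht1 hp'.2.1.natDegree_pos.ne'
      rw [Real.exp_neg, Real.exp_log (by linarith)]
  have h1 : HasSum (fun N : ℕ => ∑ p ∈ S,
      ((if p.natDegree ∣ N then p.natDegree else 0 : ℕ) : ℝ) * (z/q) ^ N / N)
      (∑ p ∈ S, -Real.log (1 - (z/q) ^ p.natDegree)) :=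
    hasSum_sum (fun p hp => hasSum_factor _ _ ((hS p).1 hp).2.1.natDegree_pos ht0 ht1)
  have h2 : HasSum (fun N : ℕ => if N ∈ Finset.Icc 1 m then z ^ N / (N : ℝ) else 0)
      (∑ i ∈ Finset.Icc 1 m, z ^ i / (i : ℝ)) := by
    have := hasSum_sum_of_ne_finset_zero (L := SummationFilter.unconditional ℕ)
      (f := fun N : ℕ => if N ∈ Finset.Icc 1 m then z ^ N / (N : ℝ) else 0)
      (s := Finset.Icc 1 m) (fun b hb => if_neg hb)
    convert this using 1
    apply Finset.sum_congr rfl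
    intro i hi
    rw [if_pos hi]
  refine ⟨∑ p ∈ S, -Real.log (1 - (z/q) ^ p.natDegree) -
    ∑ i ∈ Finset.Icc 1 m, z ^ i / (i : ℝ), ?_, ?_⟩
  · rw [Gq, hF, ← Real.exp_add, sub_eq_add_neg]
  · have h3 := h1.sub h2
    refine Eq.subst (motive := fun f => HasSum f _) (funext fun N => Eq.symm ?_) h3
    have hsum : ∑ p ∈ S,
        ((if p.natDegree ∣ N then p.natDegree else 0 : ℕ) : ℝ) * (z/q) ^ N / N
        = (acoef S N : ℝ) * (z / q) ^ N / N := by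
      rw [acoef, Nat.cast_sum, Finset.sum_mul, Finset.sum_div]
    rw [hsum, div_pow]
    by_cases hN : N = 0
    · subst hN; simp
    have hqN : q ^ N ≠ 0 := by positivity
    by_cases hNm : N ≤ m
    · rw [if_pos hNm, if_pos (Finset.mem_Icc.2 ⟨by omega, hNm⟩), acoef_eq S hS N hN hNm]
      push_cast
      rw [← hq]
      field_simp
      simp
    · rw [if_neg hNm, if_neg (fun h => hNm (Finset.mem_Icc.1 h).2)]
      field_simp
      simp

theorem geom_term (y q : ℝ) (hy0 : 0 ≤ y) (hy : y ≤ 5/4) (hq : 2 ≤ q) (j : ℕ) :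
    y ^ j / q ^ (j / 2) ≤ 2 * (9/10 : ℝ) ^ j := by
  have hr : y ^ 2 / q ≤ (9/10 : ℝ)^2 := by
    rw [div_le_iff₀ (by linarith)]
    nlinarith
  have hr0 : 0 ≤ y ^ 2 / q := by positivity
  have hk := pow_le_pow_left₀ hr0 hr (j/2)
  have h9 : (0:ℝ) ≤ ((9/10 : ℝ)^2)^(j/2) := by positivity
  rcases Nat.mod_two_eq_zero_or_one j with h | h
  · have hj : j = 2 * (j/2) := by omega
    have e1 : y ^ j = (y^2)^(j/2) := by rw [← pow_mul, ← hj]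
    have e2 : (9/10:ℝ) ^ j = ((9/10:ℝ)^2)^(j/2) := by rw [← pow_mul, ← hj]
    rw [e1, e2, ← div_pow]
    linarith
  · have hj : 2 * (j/2) + 1 = j := by omega
    have e1 : y ^ j = (y^2)^(j/2) * y := by rw [← pow_mul, ← pow_succ, hj]
    have e2 : (9/10:ℝ) ^ j = ((9/10:ℝ)^2)^(j/2) * (9/10) := by rw [← pow_mul, ← pow_succ, hj]
    rw [e1, e2, mul_div_right_comm, ← div_pow]
    have : (y ^ 2 / q) ^ (j / 2) * y ≤ ((9/10:ℝ)^2)^(j/2) * (5/4) := by gcongr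
    linarith

/-- Main analytic comparison. -/
theorem Gq_ratio (F : Type) [Field F] [Fintype F] (m : ℕ) (x y : ℝ) (hx : 0 < x)
    (hxy : x ≤ y) (hy : y ≤ 5/4) :
    |Gq F m x / Gq F m y - 1| ≤ 40 * Real.log (y / x) * y ^ (m + 1) /
      (Fintype.card F : ℝ) ^ ((m + 2) / 2) := by
  classical
  obtain ⟨S, hS⟩ := exists_S F m
  have hy0 : 0 < y := hx.trans_le hxy
  obtain ⟨Lx, hLx, hsx⟩ := hasSum_logG S hS x hx.le (by linarith)
  obtain ⟨Ly, hLy, hsy⟩ := hasSum_logG S hS y hy0.le (by linarith)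
  have hq2 : (2:ℝ) ≤ (Fintype.card F : ℝ) := by
    have : 2 ≤ Fintype.card F := Fintype.one_lt_card
    exact_mod_cast this
  have hacoef : ∀ N, m < N → (acoef S N : ℝ) ≤ 2 * (Fintype.card F : ℝ) ^ (N/2) := by
    intro N hN
    exact_mod_cast acoef_le S hS N hN
  set q : ℝ := (Fintype.card F : ℝ) with hq
  set δ := Real.log (y / x) with hδ
  have hδ0 : 0 ≤ δ := Real.log_nonneg (by rw [le_div_iff₀ hx]; linarith)
  have hD := hsy.sub hsx
  have hpow : ∀ N : ℕ, y ^ N / N - x ^ N / N ≤ δ * y ^ N := by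
    intro N
    by_cases hN : N = 0
    · subst hN; simpa using hδ0
    have hNpos : (0:ℝ) < N := by positivity
    have h1 : x ^ N = y ^ N * Real.exp (-(N * δ)) := by
      rw [Real.exp_neg, Real.exp_nat_mul, hδ, Real.exp_log (by positivity), div_pow]
      field_simp
    have h2 : 1 - N * δ ≤ Real.exp (-(N * δ)) := by
      have := Real.add_one_le_exp (-(N * δ)); linarith
    rw [← sub_div, div_le_iff₀ hNpos, h1]
    have := mul_le_mul_of_nonneg_left h2 (pow_pos hy0 N).le
    nlinarith
  have hmono : ∀ N : ℕ, 0 ≤ y ^ N / N - x ^ N / N := by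
    intro N
    rw [← sub_div]
    have := pow_le_pow_left₀ hx.le hxy N
    exact div_nonneg (by linarith) (by positivity)
  have hinj : Function.Injective (fun j : ℕ => m + 1 + j) := fun a b h => by
    simpa using h
  have hD0 : 0 ≤ Ly - Lx := by
    refine HasSum.nonneg ?_ hD
    intro N
    rw [← mul_sub]
    refine mul_nonneg (div_nonneg ?_ (by positivity)) (hmono N)
    split_ifs <;> positivity
  have hD2 := (hinj.hasSum_iff ?_).2 hD
  swap
  · intro N hN
    have : N ≤ m := by
      by_contra h
      exact hN ⟨N - (m+1), by simp only; omega⟩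
    simp [this]
  have hgeo : HasSum (fun j : ℕ => 2 * δ * y ^ (m+1) / q ^ ((m+2)/2) * (2 * (9/10:ℝ)^j))
      (2 * δ * y ^ (m+1) / q ^ ((m+2)/2) * (2 * (1 - 9/10)⁻¹)) :=
    ((hasSum_geometric_of_lt_one (by norm_num) (by norm_num)).mul_left 2).mul_left _
  have hDle : Ly - Lx ≤ 2 * δ * y ^ (m+1) / q ^ ((m+2)/2) * (2 * (1 - 9/10)⁻¹) := by
    refine hasSum_le ?_ hD2 hgeo
    intro j
    have hNm : ¬ (m + 1 + j ≤ m) := by omega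
    simp only [Function.comp, if_neg hNm]
    rw [← mul_sub]
    set N := m + 1 + j with hN
    have hqpos : 0 < q := by linarith
    have hsplit : q ^ (N/2) * (q ^ ((m+2)/2) * q ^ (j/2)) ≤ q ^ N := by
      rw [← pow_add, ← pow_add]
      exact pow_le_pow_right₀ (by linarith) (by omega)
    have hA : (acoef S N : ℝ) / q ^ N ≤ 2 / (q ^ ((m+2)/2) * q ^ (j/2)) := by
      rw [div_le_div_iff₀ (by positivity) (by positivity)]
      have h3 := hacoef N (by omega)
      calc (acoef S N : ℝ) * (q ^ ((m+2)/2) * q ^ (j/2))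
          ≤ (2 * q ^ (N/2)) * (q ^ ((m+2)/2) * q ^ (j/2)) := by gcongr
        _ ≤ 2 * q ^ N := by linarith
    calc (acoef S N : ℝ) / q ^ N * (y ^ N / N - x ^ N / N)
        ≤ 2 / (q ^ ((m+2)/2) * q ^ (j/2)) * (δ * y ^ N) :=
          mul_le_mul hA (hpow N) (hmono N) (by positivity)
      _ = 2 * δ * y ^ (m+1) / q ^ ((m+2)/2) * (y ^ j / q ^ (j/2)) := by
          rw [hN, pow_add]; field_simp
      _ ≤ _ := by
          apply mul_le_mul_of_nonneg_left (geom_term y q hy0.le hy hq2 j)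
          positivity
  rw [hLx, hLy, ← Real.exp_sub]
  have e1 : Real.exp (Lx - Ly) ≤ 1 := Real.exp_le_one_iff.2 (by linarith)
  have e2 := Real.add_one_le_exp (Lx - Ly)
  rw [abs_of_nonpos (by linarith)]
  calc -(Real.exp (Lx - Ly) - 1) ≤ Ly - Lx := by linarith
    _ ≤ _ := hDle
    _ = _ := by ring

/-- `sinh t / t` is monotone. -/
theorem sinh_ratio (a b : ℝ) (ha : 0 < a) (hab : a ≤ b) :
    b * Real.sinh a ≤ a * Real.sinh b := by
  have hconv : ConvexOn ℝ (Set.Ici (0:ℝ)) Real.sinh := by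
    apply MonotoneOn.convexOn_of_deriv (convex_Ici 0) Real.continuous_sinh.continuousOn
      Real.differentiable_sinh.differentiableOn
    rw [Real.deriv_sinh, interior_Ici]
    intro s hs t ht hst
    have hs' : 0 < s := hs
    have ht' : 0 < t := ht
    rw [Real.cosh_le_cosh, abs_of_pos hs', abs_of_pos ht']
    exact hst
  have hb : 0 < b := ha.trans_le hab
  have := hconv.secant_mono (a := 0) (x := a) (y := b) (by simp) ha.le hb.le ha.ne' hb.ne' hab
  simp only [Real.sinh_zero, sub_zero] at this
  rw [div_le_div_iff₀ ha hb] at this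
  linarith

theorem exp_sub_one_eq (t : ℝ) :
    Real.exp t - 1 = 2 * Real.exp (t/2) * Real.sinh (t/2) := by
  rw [Real.sinh_eq]
  have h1 : Real.exp t = Real.exp (t/2) * Real.exp (t/2) := by
    rw [← Real.exp_add]; ring_nf
  have h2 : Real.exp (t/2) * Real.exp (-(t/2)) = 1 := by
    rw [← Real.exp_add]; simp
  rw [h1]
  linear_combination h2

theorem xi_one : xi 1 = 0 := by
  unfold xi
  rw [dif_neg]
  rintro ⟨x, hx, h⟩
  have := Real.add_one_lt_exp hx.ne'
  linarith

theorem xi_spec (u : ℝ) (hu : 1 < u) : 0 < xi u ∧ Real.exp (xi u) = 1 + u * xi u := by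
  have hex : ∃ x : ℝ, 0 < x ∧ Real.exp x = 1 + u * x := by
    let g : ℝ → ℝ := fun x => Real.exp x - 1 - u * x
    have hg : Continuous g := by fun_prop
    have hlog : 0 < Real.log u := Real.log_pos hu
    have hlt := Real.log_lt_sub_one_of_pos (by linarith : 0 < u) hu.ne'
    have hlogu : g (Real.log u) ≤ 0 := by
      simp only [g]
      rw [Real.exp_log (by linarith)]
      have h1 := Real.one_sub_inv_le_log_of_pos (by linarith : 0 < u)
      have h2 : u * (1 - u⁻¹) ≤ u * Real.log u := by gcongr
      have h3 : u * (1 - u⁻¹) = u - 1 := by field_simp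
      linarith
    have hbig : 0 ≤ g (2 * u) := by
      simp only [g]
      have := Real.quadratic_le_exp_of_nonneg (by linarith : 0 ≤ 2 * u)
      nlinarith
    obtain ⟨c, hc, hc0⟩ := intermediate_value_Icc (by linarith : Real.log u ≤ 2 * u)
      hg.continuousOn ⟨hlogu, hbig⟩
    refine ⟨c, by linarith [hc.1], ?_⟩
    simp only [g] at hc0
    linarith
  unfold xi
  rw [dif_pos hex]
  exact hex.choose_spec

theorem xi_le (u : ℝ) (hu : 1 < u) : xi u ≤ 2 * Real.log u := by
  obtain ⟨h0, h⟩ := xi_spec u hu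
  set t := xi u
  have h1 := exp_sub_one_eq t
  have h2 : t / 2 ≤ Real.sinh (t/2) := Real.self_le_sinh_iff.2 (by linarith)
  have h3 : Real.exp (t/2) ≤ u := by
    have h4 : Real.exp (t/2) * (t/2) ≤ Real.exp (t/2) * Real.sinh (t/2) := by gcongr
    have : Real.exp (t/2) * t ≤ u * t := by nlinarith
    exact le_of_mul_le_mul_right this h0
  have := (Real.le_log_iff_exp_le (by linarith)).2 h3
  linarith

/-- Comparison of `x` and `e^{ξ/m}`. -/
theorem x_compare (m : ℕ) (hm : 1 ≤ m) (u : ℝ) (hu : 1 < u) (x : ℝ) (hx : 0 < x)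
    (hsum : ∑ i ∈ Finset.Icc 1 m, x ^ i = m * u) :
    0 < Real.log x ∧ m * Real.log x ≤ xi u ∧ xi u - m * Real.log x ≤ Real.log x := by
  obtain ⟨h0, h⟩ := xi_spec u hu
  have hm0 : (0:ℝ) < m := by exact_mod_cast hm
  have hx1 : 1 < x := by
    by_contra hle
    push Not at hle
    have : ∑ i ∈ Finset.Icc 1 m, x ^ i ≤ ∑ i ∈ Finset.Icc 1 m, (1:ℝ) :=
      Finset.sum_le_sum (fun i _ => pow_le_one₀ hx.le hle)
    simp at this
    nlinarith
  have hL : 0 < Real.log x := Real.log_pos hx1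
  have hxe : Real.exp (Real.log x) = x := Real.exp_log hx
  set L := Real.log x
  set t := xi u
  have hgeo : ∀ k : ℕ, (1 - x⁻¹) * ∑ i ∈ Finset.Icc 1 k, x ^ i = x ^ k - 1 := by
    intro k
    induction k with
    | zero => simp
    | succ k ih =>
      rw [Finset.sum_Icc_succ_top (by omega), mul_add, ih]
      field_simp
      ring
  have hs := hgeo m
  have hxm : x ^ m = Real.exp (m * L) := by rw [Real.exp_nat_mul, hxe]
  rw [hsum, hxm] at hs
  have hxinv : x⁻¹ = Real.exp (-L) := by rw [Real.exp_neg, hxe]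
  rw [hxinv] at hs
  set s := m * L with hsdef
  have hs0 : 0 < s := by positivity
  have hup : Real.exp s - 1 ≤ s * u := by
    have := Real.add_one_le_exp (-L)
    have h1 : 1 - Real.exp (-L) ≤ L := by linarith
    rw [← hs, hsdef]
    have : (1 - Real.exp (-L)) * (m * u) ≤ L * (m * u) := by gcongr
    linarith
  have hlow : Real.exp (-(L/2)) * (s * u) ≤ Real.exp s - 1 := by
    rw [← hs, hsdef]
    have h1 := exp_sub_one_eq L
    have h2 : L / 2 ≤ Real.sinh (L/2) := Real.self_le_sinh_iff.2 (by linarith)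
    have h3 : Real.exp (-(L/2)) * L ≤ 1 - Real.exp (-L) := by
      have e1 : 1 - Real.exp (-L) = Real.exp (-L) * (Real.exp L - 1) := by
        rw [mul_sub, ← Real.exp_add]; simp
      have e2 : Real.exp (-L) * Real.exp (L/2) = Real.exp (-(L/2)) := by
        rw [← Real.exp_add]; ring_nf
      rw [e1, h1]
      have : Real.exp (-(L/2)) * (L/2) ≤ Real.exp (-(L/2)) * Real.sinh (L/2) := by gcongr
      calc Real.exp (-(L/2)) * L ≤ 2 * (Real.exp (-(L/2)) * Real.sinh (L/2)) := by linarith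
        _ = _ := by rw [← e2]; ring
    have : Real.exp (-(L/2)) * L * (m * u) ≤ (1 - Real.exp (-L)) * (m * u) := by gcongr
    linarith
  have hts := exp_sub_one_eq t
  have hss := exp_sub_one_eq s
  have hst : s ≤ t := by
    by_contra hlt
    push Not at hlt
    have h1 := sinh_ratio (t/2) (s/2) (by linarith) (by linarith)
    have h2 : Real.exp (t/2) < Real.exp (s/2) := Real.exp_lt_exp.2 (by linarith)
    have hsp : 0 < Real.sinh (t/2) := Real.sinh_pos_iff.2 (by linarith)
    -- s * (e^t - 1) < t * (e^s - 1)
    have h3 : s * (Real.exp t - 1) < t * (Real.exp s - 1) := by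
      rw [hts, hss]
      have h4 : Real.exp (t/2) * (s * Real.sinh (t/2)) < Real.exp (s/2) * (s * Real.sinh (t/2)) := by
        gcongr
      have h5 : Real.exp (s/2) * (s * Real.sinh (t/2)) ≤ Real.exp (s/2) * (t * Real.sinh (s/2)) := by
        gcongr 1
        linarith
      linarith
    have h6 : Real.exp t - 1 = u * t := by linarith
    rw [h6] at h3
    have h7 : t * (Real.exp s - 1) ≤ t * (s * u) := by gcongr
    linarith
  refine ⟨hL, hst, ?_⟩
  have h1 := sinh_ratio (s/2) (t/2) (by linarith) (by linarith)
  have h3 : Real.exp ((t-s)/2) * (t * (Real.exp s - 1)) ≤ s * (Real.exp t - 1) := by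
    have e : Real.exp ((t-s)/2) * Real.exp (s/2) = Real.exp (t/2) := by
      rw [← Real.exp_add]; ring_nf
    rw [hts, hss]
    calc Real.exp ((t-s)/2) * (t * (2 * Real.exp (s/2) * Real.sinh (s/2)))
        = 2 * (Real.exp (t/2) * (t * Real.sinh (s/2))) := by rw [← e]; ring
      _ ≤ 2 * (Real.exp (t/2) * (s * Real.sinh (t/2))) := by
          gcongr 2 * (_ * ?_)
          linarith
      _ = _ := by ring
  have h6 : Real.exp t - 1 = u * t := by linarith
  rw [h6] at h3
  have h8 : Real.exp ((t-s)/2) * Real.exp (-(L/2)) * (t * (s * u)) ≤ 1 * (t * (s * u)) := by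
    calc Real.exp ((t-s)/2) * Real.exp (-(L/2)) * (t * (s * u))
        = Real.exp ((t-s)/2) * (t * (Real.exp (-(L/2)) * (s * u))) := by ring
      _ ≤ Real.exp ((t-s)/2) * (t * (Real.exp s - 1)) := by gcongr
      _ ≤ _ := by linarith
  have h9 := le_of_mul_le_mul_right h8 (by positivity)
  rw [← Real.exp_add, Real.exp_le_one_iff] at h9
  linarith

theorem x_one (m : ℕ) (hm : 1 ≤ m) (x : ℝ) (hx : 0 < x)
    (hsum : ∑ i ∈ Finset.Icc 1 m, x ^ i = m) : x = 1 := by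
  have hc : ∑ i ∈ Finset.Icc 1 m, (1:ℝ) = m := by simp
  have hne : (Finset.Icc 1 m).Nonempty := ⟨1, Finset.mem_Icc.2 ⟨le_rfl, hm⟩⟩
  rcases lt_trichotomy x 1 with h | h | h
  · have : ∑ i ∈ Finset.Icc 1 m, x ^ i < ∑ i ∈ Finset.Icc 1 m, (1:ℝ) :=
      Finset.sum_lt_sum_of_nonempty hne (fun i hi =>
        pow_lt_one₀ hx.le h (by have := (Finset.mem_Icc.1 hi).1; omega))
    linarith
  · exact h
  · have : ∑ i ∈ Finset.Icc 1 m, (1:ℝ) < ∑ i ∈ Finset.Icc 1 m, x ^ i :=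
      Finset.sum_lt_sum_of_nonempty hne (fun i hi =>
        one_lt_pow₀ h (by have := (Finset.mem_Icc.1 hi).1; omega))
    linarith

theorem exp_fifth : Real.exp (1/5) ≤ 5/4 := by
  rw [← Real.le_log_iff_exp_le (by norm_num)]
  have := Real.one_sub_inv_le_log_of_pos (by norm_num : (0:ℝ) < 5/4)
  norm_num at this ⊢
  linarith

theorem exp_fifth_lt (a : ℝ) (ha : a ≤ 1/5) : Real.exp a < (2 : ℝ) ^ ((1 : ℝ) / 3) := by
  rw [Real.rpow_def_of_pos (by norm_num), Real.exp_lt_exp]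
  have := Real.log_two_gt_d9
  linarith

end helpers

/-- Suppose `n ≥ m ≥ 1` and `m ≥ √(10·n·log n)`, and write `u = n/m`. Then
`e^{ξ(u)/m} < 2^{1/3}`, and there is an absolute constant `C > 0` such that for every
prime power `q` (the cardinality of a finite field `F`) one has
`|G_q(x)/G_q(e^{ξ(u)/m}) − 1| ≤ C·u·(log(u+1))²/(m²·q^{⌈(m+1)/2⌉})`. -/
theorem stmt18 :
    ∃ C : ℝ, 0 < C ∧ ∀ n m : ℕ, 1 ≤ m → m ≤ n →
      Real.sqrt (10 * (n : ℝ) * Real.log n) ≤ (m : ℝ) →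
      ∀ u : ℝ, u = (n : ℝ) / (m : ℝ) →
      Real.exp (xi u / (m : ℝ)) < (2 : ℝ) ^ ((1 : ℝ) / 3) ∧
      ∀ (F : Type) [Field F] [Fintype F],
      ∀ x : ℝ, 0 < x → (∑ i ∈ Finset.Icc 1 m, x ^ i) = (n : ℝ) →
      |Gq F m x / Gq F m (Real.exp (xi u / (m : ℝ))) - 1| ≤
        C * u * (Real.log (u + 1)) ^ 2 /
          ((m : ℝ) ^ 2 * (Fintype.card F : ℝ) ^ ((m + 2) / 2)) := by
  refine ⟨400, by norm_num, ?_⟩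
  intro n m hm hmn hsq u hu
  have hm0 : (0:ℝ) < m := by exact_mod_cast hm
  have hm1 : (1:ℝ) ≤ m := by exact_mod_cast hm
  have hmn' : (m:ℝ) ≤ n := by exact_mod_cast hmn
  have hn1 : (1:ℝ) ≤ n := hm1.trans hmn'
  have hnu : (n:ℝ) = m * u := by rw [hu]; field_simp
  have hu1 : 1 ≤ u := by rw [hu, le_div_iff₀ hm0]; linarith
  have hun : u ≤ n := by rw [hu, div_le_iff₀ hm0]; nlinarith
  have hlogn : 0 ≤ Real.log n := Real.log_nonneg hn1
  have hlogu : 0 ≤ Real.log u := Real.log_nonneg hu1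
  have hlogun : Real.log u ≤ Real.log n := Real.log_le_log (by linarith) hun
  have hsq' : 10 * (n:ℝ) * Real.log n ≤ (m:ℝ)^2 := (Real.sqrt_le_left hm0.le).1 hsq
  have hlm : 10 * Real.log n ≤ m := by
    have : (10 * Real.log n) * n ≤ m * n := by nlinarith
    exact le_of_mul_le_mul_right this (by linarith)
  rcases hu1.eq_or_lt with h1 | h1
  · subst h1
    rw [xi_one, zero_div]
    refine ⟨exp_fifth_lt 0 (by norm_num), ?_⟩
    intro F _ _ x hx hsum
    have hx1 := x_one m hm x hx (by rw [hsum, hnu, mul_one])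
    rw [Real.exp_zero, hx1]
    refine (Gq_ratio F m 1 1 one_pos le_rfl (by norm_num)).trans ?_
    simp only [div_one, Real.log_one, mul_zero, zero_mul, zero_div]
    positivity
  · have hxile := xi_le u h1
    obtain ⟨hxi0, hxie⟩ := xi_spec u h1
    have hxim : xi u / m ≤ 1/5 := by
      rw [div_le_iff₀ hm0]; linarith
    refine ⟨exp_fifth_lt _ hxim, ?_⟩
    intro F _ _ x hx hsum
    obtain ⟨hL, hc1, hc2⟩ := x_compare m hm u h1 x hx (by rw [hsum, hnu])
    set y := Real.exp (xi u / m) with hy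
    have hy0 : 0 < y := Real.exp_pos _
    have hylog : Real.log y = xi u / m := Real.log_exp _
    have hy54 : y ≤ 5/4 := (Real.exp_le_exp.2 hxim).trans exp_fifth
    have hxy : x ≤ y := by
      rw [← Real.log_le_log_iff hx hy0, hylog, le_div_iff₀ hm0]
      linarith
    refine (Gq_ratio F m x y hx hxy hy54).trans ?_
    have hδ : Real.log (y / x) ≤ 2 * Real.log u / (m:ℝ)^2 := by
      rw [Real.log_div hy0.ne' hx.ne', hylog, le_div_iff₀ (by positivity)]
      have : (xi u / m - Real.log x) * (m:ℝ)^2 = (xi u - m * Real.log x) * m := by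
        field_simp
      rw [this]
      nlinarith
    have hlogmono : Real.log u ≤ Real.log (u+1) := Real.log_le_log (by linarith) (by linarith)
    have hlog2 : 1/2 ≤ Real.log (u+1) := by
      have h2 : Real.log 2 ≤ Real.log (u+1) := Real.log_le_log (by norm_num) (by linarith)
      have := Real.log_two_gt_d9
      linarith
    have hym : y ^ (m+1) ≤ 5 * u * Real.log (u+1) := by
      have h3 : y ^ m = 1 + u * xi u := by
        rw [hy, ← Real.exp_nat_mul, ← hxie]
        congr 1
        field_simp
      have h4 : y ^ m ≤ 4 * u * Real.log (u+1) := by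
        rw [h3]
        have a1 : u * xi u ≤ u * (2 * Real.log (u+1)) := by gcongr; linarith
        have a2 : 1 * (1/2) ≤ u * Real.log (u+1) := by gcongr
        linarith
      rw [pow_succ]
      calc y ^ m * y ≤ (4 * u * Real.log (u+1)) * (5/4) := by gcongr
        _ = _ := by ring
    have hδ0 : 0 ≤ Real.log (y/x) := Real.log_nonneg (by rw [le_div_iff₀ hx]; linarith)
    rw [← div_div]
    have hqp : (0:ℝ) < (Fintype.card F : ℝ) := by exact_mod_cast Fintype.card_pos
    apply div_le_div_of_nonneg_right _ (by positivity)
    calc 40 * Real.log (y/x) * y ^ (m+1)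
        ≤ 40 * (2 * Real.log (u+1) / (m:ℝ)^2) * (5 * u * Real.log (u+1)) := by
          gcongr
          exact hδ.trans (by gcongr)
      _ = _ := by ring
end

section
/- There exists an absolute constant C > 0 such that for every integer m ≥ 1 and every real u > 1 with ξ(u) ≤ π·m, one has | T(ξ(u)) − (u−1)·ξ(u)/(2m) | ≤ C·u·(log(u+1))²/m², where T(s) = ∫₀^{s} ((e^{t} − 1)/t) · ( (t/m)/(1 − e^{−t/m}) − 1 ) dt. -/
open Real

lemma aux_lower (w : ℝ) (hw : 0 ≤ w) : 0 ≤ (w - 2) * Real.exp w + w + 2 := by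
  have hd : ∀ x : ℝ, HasDerivAt (fun w : ℝ => (w - 2) * Real.exp w + w + 2)
      ((x - 1) * Real.exp x + 1) x := by
    intro x
    have h1 : HasDerivAt (fun w : ℝ => w - 2) 1 x := (hasDerivAt_id x).sub_const 2
    have h2 := ((h1.mul (Real.hasDerivAt_exp x)).add (hasDerivAt_id x)).add_const 2
    refine h2.congr_deriv ?_
    ring
  have hm : Monotone (fun w : ℝ => (w - 2) * Real.exp w + w + 2) := by
    apply monotone_of_deriv_nonneg (fun x => (hd x).differentiableAt)
    intro x
    rw [(hd x).deriv]
    have h1 := Real.add_one_le_exp (-x)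
    have h2 : Real.exp (-x) * Real.exp x = 1 := by rw [← Real.exp_add]; simp
    nlinarith [Real.exp_pos x]
  have h0 := hm hw
  simp at h0
  linarith

lemma aux_g (w : ℝ) (hw : 0 < w) :
    |w / (1 - Real.exp (-w)) - 1 - w / 2| ≤ w ^ 2 / 4 := by
  have hE : 0 < Real.exp (-w) := Real.exp_pos _
  have h2 : Real.exp (-w) * Real.exp w = 1 := by rw [← Real.exp_add]; simp
  have hlt : Real.exp (-w) < 1 := by rw [Real.exp_lt_one_iff]; linarith
  have hden : 0 < 1 - Real.exp (-w) := by linarith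
  have hl := aux_lower w hw.le
  have hq := Real.quadratic_le_exp_of_nonneg hw.le
  have e1 : (w - 2) + (w + 2) * Real.exp (-w) ≥ 0 := by
    have := mul_nonneg hE.le hl
    nlinarith
  have e2 : Real.exp (-w) * (1 + w + w ^ 2 / 2) ≤ 1 := by nlinarith
  have e3 : 1 + w / 2 ≤ w / (1 - Real.exp (-w)) := by
    rw [le_div_iff₀ hden]; nlinarith
  have e4 : w / (1 - Real.exp (-w)) ≤ 1 + w / 2 + w ^ 2 / 4 := by
    rw [div_le_iff₀ hden]
    have hp : 0 < 1 + w + w ^ 2 / 2 := by positivity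
    have e5 : Real.exp (-w) ≤ 1 / (1 + w + w ^ 2 / 2) := by
      rw [le_div_iff₀ hp]; exact e2
    have e6 : (1 + w / 2 + w ^ 2 / 4) * (1 - 1 / (1 + w + w ^ 2 / 2)) ≥ w := by
      have h8 : 1 - 1 / (1 + w + w ^ 2 / 2) = (w + w ^ 2 / 2) / (1 + w + w ^ 2 / 2) := by
        field_simp
        ring
      rw [h8, ge_iff_le, mul_div_assoc', le_div_iff₀ hp]
      nlinarith [pow_pos hw 3, pow_pos hw 4]
    have e7 : (1 + w / 2 + w ^ 2 / 4) * (1 - 1 / (1 + w + w ^ 2 / 2))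
        ≤ (1 + w / 2 + w ^ 2 / 4) * (1 - Real.exp (-w)) := by
      apply mul_le_mul_of_nonneg_left _ (by positivity)
      linarith
    linarith
  rw [abs_le]; constructor <;> nlinarith [sq_nonneg w]

lemma aux_xi (u x : ℝ) (hu : 1 < u) (hx : 0 < x) (h : Real.exp x = 1 + u * x) :
    x ≤ 2 * Real.log (u + 1) := by
  have hs : x / 2 ≤ Real.sinh (x / 2) := Real.self_le_sinh_iff.2 (by linarith)
  rw [Real.sinh_eq] at hs
  have h1 : Real.exp (x / 2) * Real.exp (x / 2) = Real.exp x := by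
    rw [← Real.exp_add]; congr 1; ring
  have h2 : Real.exp (x / 2) * Real.exp (-(x / 2)) = 1 := by
    rw [← Real.exp_add]; simp
  have h3 : Real.exp (x / 2) * x ≤ u * x := by
    nlinarith [Real.exp_pos (x / 2)]
  have h4 : Real.exp (x / 2) ≤ u := le_of_mul_le_mul_right h3 hx
  have h5 : x / 2 ≤ Real.log (u + 1) := by
    rw [Real.le_log_iff_exp_le (by linarith)]; linarith
  linarith

lemma aux_main (m : ℕ) (hm : 1 ≤ m) (x : ℝ) (hx : 0 < x) :
    |Tfun m x - (Real.exp x - 1 - x) / (2 * (m : ℝ))| ≤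
      x * (Real.exp x - 1 - x) / (4 * (m : ℝ) ^ 2) := by
  have hm0 : (0:ℝ) < m := by exact_mod_cast hm
  set f : ℝ → ℝ := fun t => if t = 0 then 0 else
      ((Real.exp t - 1) / t) * ((t / (m : ℝ)) / (1 - Real.exp (-t / (m : ℝ))) - 1) with hf
  have hfm : Measurable f := by
    apply Measurable.ite (measurableSet_singleton 0) measurable_const
    fun_prop
  have hint : ∫ t in (0:ℝ)..x, (Real.exp t - 1) = Real.exp x - 1 - x := by
    rw [intervalIntegral.integral_sub (by simp) (by simp)]
    simp
  have hb : ∀ t ∈ Set.Ioc 0 x, ‖f t - (Real.exp t - 1) / (2 * (m:ℝ))‖ ≤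
      x / (4 * (m:ℝ) ^ 2) * (Real.exp t - 1) := by
    intro t ht
    have ht0 : 0 < t := ht.1
    have hg := aux_g (t / m) (by positivity)
    have he : 0 < Real.exp t - 1 := by
      have := Real.add_one_le_exp t
      linarith
    have h1 : f t - (Real.exp t - 1) / (2 * (m:ℝ)) =
        (Real.exp t - 1) / t * (t / m / (1 - Real.exp (-(t / m))) - 1 - t / m / 2) := by
      simp only [hf, ht0.ne', if_false, neg_div]
      field_simp
    rw [h1, Real.norm_eq_abs, abs_mul, abs_of_pos (by positivity)]
    calc _ ≤ (Real.exp t - 1) / t * ((t / m) ^ 2 / 4) := by gcongr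
      _ = t / (4 * (m:ℝ) ^ 2) * (Real.exp t - 1) := by field_simp
      _ ≤ _ := by
        gcongr
        exact ht.2
  have hBi : IntervalIntegrable (fun t => x / (4 * (m:ℝ) ^ 2) * (Real.exp t - 1))
      MeasureTheory.volume 0 x := by
    apply Continuous.intervalIntegrable; fun_prop
  have hEi : IntervalIntegrable (fun t => (Real.exp t - 1) / (2 * (m:ℝ)))
      MeasureTheory.volume 0 x := by
    apply Continuous.intervalIntegrable; fun_prop
  have hdi : IntervalIntegrable (fun t => f t - (Real.exp t - 1) / (2 * (m:ℝ)))
      MeasureTheory.volume 0 x := by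
    rw [intervalIntegrable_iff_integrableOn_Ioc_of_le hx.le] at hBi ⊢
    refine MeasureTheory.Integrable.mono' hBi ?_ ?_
    · apply Measurable.aestronglyMeasurable
      fun_prop
    · exact (MeasureTheory.ae_restrict_iff' measurableSet_Ioc).2 (Filter.Eventually.of_forall hb)
  have hfi : IntervalIntegrable f MeasureTheory.volume 0 x := by
    have := hdi.add hEi
    refine this.congr ?_
    intro t _
    simp
  have hT : Tfun m x - (Real.exp x - 1 - x) / (2 * (m : ℝ)) =
      ∫ t in (0:ℝ)..x, (f t - (Real.exp t - 1) / (2 * (m:ℝ))) := by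
    rw [intervalIntegral.integral_sub hfi hEi, intervalIntegral.integral_div, hint]
    rfl
  rw [hT, ← Real.norm_eq_abs]
  refine (intervalIntegral.norm_integral_le_of_norm_le hx.le
    (Filter.Eventually.of_forall hb) hBi).trans ?_
  rw [intervalIntegral.integral_const_mul, hint]
  apply le_of_eq; ring

/-- There exists an absolute constant `C > 0` such that for every integer
`m ≥ 1` and every real `u > 1` with `ξ(u) ≤ π·m`, one has
`|T(ξ(u)) − (u−1)·ξ(u)/(2m)| ≤ C·u·(log(u+1))²/m²`. -/
theorem stmt19 :
    ∃ C : ℝ, 0 < C ∧ ∀ m : ℕ, 1 ≤ m → ∀ u : ℝ, 1 < u → xi u ≤ Real.pi * (m : ℝ) →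
      |Tfun m (xi u) - (u - 1) * xi u / (2 * (m : ℝ))| ≤
        C * u * (Real.log (u + 1)) ^ 2 / (m : ℝ) ^ 2 := by
  refine ⟨1, one_pos, ?_⟩
  intro m hm u hu _
  have hm0 : (0:ℝ) < m := by exact_mod_cast hm
  by_cases h : ∃ x : ℝ, 0 < x ∧ Real.exp x = 1 + u * x
  · have hxi : 0 < xi u ∧ Real.exp (xi u) = 1 + u * xi u := by
      unfold xi
      rw [dif_pos h]
      exact h.choose_spec
    obtain ⟨hx, he⟩ := hxi
    generalize xi u = x at hx he
    have h1 := aux_main m hm x hx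
    have h2 := aux_xi u x hu hx he
    have h3 : Real.exp x - 1 - x = (u - 1) * x := by rw [he]; ring
    rw [h3] at h1
    refine h1.trans ?_
    have h4 : x ^ 2 ≤ (2 * Real.log (u + 1)) ^ 2 := by gcongr
    have h5 : x * ((u - 1) * x) ≤ 4 * (1 * u * Real.log (u + 1) ^ 2) := by
      nlinarith [mul_le_mul_of_nonneg_left h4 (by linarith : (0:ℝ) ≤ u), sq_nonneg x]
    rw [div_le_div_iff₀ (by positivity) (by positivity)]
    nlinarith [mul_le_mul_of_nonneg_right h5 (sq_nonneg (m:ℝ))]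
  · have hxi : xi u = 0 := by
      unfold xi
      rw [dif_neg h]
    rw [hxi]
    simp [Tfun]
    positivity
end
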